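/- arXiv:1808.05435 — 5 statements merged into one kernel-verified Lean document; each statement's English description precedes it below -/
import Mathlib

section
/- Let A be a complex semisimple unital Banach algebra and let a, b ∈ A. Then a = b if and only if ρ(a + x) ≤ ρ(b + x) for all x in some open neighbourhood of −b. -/
open Complex

noncomputable section

/-- The nonzero spectrum `σ'(x) = σ(x) \ {0}` of an element of a complex algebra. -/
def nzSpec {A : Type*} [Ring A] [Algebra ℂ A] (x : A) : Set ℂ :=
  spectrum ℂ x \ {0}

/-- The spectral rank of an element: `rank a = sup_{x ∈ A} #σ'(xa)`, valued in `ℕ∞`. -/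
noncomputable def srank {A : Type*} [Ring A] [Algebra ℂ A] (a : A) : ℕ∞ :=
  ⨆ x : A, (nzSpec (x * a)).encard

/-- The socle of `A`: the set of finite-rank elements. -/
def socle (A : Type*) [Ring A] [Algebra ℂ A] : Set A :=
  {a : A | srank a ≠ ⊤}

/-- `A` is (Jacobson) semisimple: its Jacobson radical is `{0}`. -/
def JacobsonSemisimple (A : Type*) [Ring A] : Prop :=
  TwoSidedIdeal.jacobson (⊥ : TwoSidedIdeal A) = ⊥

/-- `Soc A` is a minimal two-sided ideal: it is a nonzero two-sided ideal containing
no two-sided ideals other than `{0}` and itself. -/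
def SocleIsMinimalTwoSidedIdeal (A : Type*) [Ring A] [Algebra ℂ A] : Prop :=
  ∃ I : TwoSidedIdeal A, (I : Set A) = socle A ∧ I ≠ ⊥ ∧
    ∀ J : TwoSidedIdeal A, J ≤ I → J = ⊥ ∨ J = I

/-- `A` is a prime algebra: all nonzero two-sided ideals `I, J` satisfy `IJ ≠ {0}`. -/
def IsPrimeAlgebra (A : Type*) [Ring A] : Prop :=
  ∀ I J : TwoSidedIdeal A, I ≠ ⊥ → J ≠ ⊥ → ∃ x ∈ I, ∃ y ∈ J, x * y ≠ 0

/-- The left annihilator of the socle equals `{0}`. -/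
def LeftAnnSocleTrivial (A : Type*) [Ring A] [Algebra ℂ A] : Prop :=
  {x : A | ∀ y ∈ socle A, x * y = 0} = {0}

open Filter Topology

section helpers

variable {A : Type*} [NormedRing A] [NormOneClass A] [NormedAlgebra ℂ A] [CompleteSpace A]

lemma qn_smul {x : A} (hx : spectralRadius ℂ x = 0) (s : ℂ) : spectralRadius ℂ (s • x) = 0 := by
  have : Nontrivial A := NormOneClass.nontrivial (G := A)
  rw [spectralRadius] at hx ⊢
  simp only [ENNReal.iSup_eq_zero] at hx ⊢
  intro k hk
  rw [spectrum.smul_eq_smul s x (spectrum.nonempty x)] at hk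
  obtain ⟨l, hl, rfl⟩ := hk
  have h := hx l hl
  simp only [ENNReal.coe_eq_zero, nnnorm_eq_zero] at h
  simp [h]

lemma qn_exists {x : A} (hx : spectralRadius ℂ x = 0) {ε : ℝ} (hε : 0 < ε) :
    ∃ k : ℕ, ‖x ^ (2 ^ k)‖ < ε ^ (2 ^ k) := by
  have h := spectrum.pow_norm_pow_one_div_tendsto_nhds_spectralRadius x
  rw [hx] at h
  have h2 := h.comp (tendsto_pow_atTop_atTop_of_one_lt (r := 2) one_lt_two)
  have h3 := h2.eventually_lt_const (ENNReal.ofReal_pos.2 hε)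
  obtain ⟨k, hk⟩ := h3.exists
  refine ⟨k, ?_⟩
  simp only [Function.comp] at hk
  rw [ENNReal.ofReal_lt_ofReal_iff hε] at hk
  have hn : (2 ^ k : ℕ) ≠ 0 := by positivity
  have h4 := pow_lt_pow_left₀ hk (by positivity) hn
  rwa [one_div, Real.rpow_inv_natCast_pow (norm_nonneg _) hn] at h4

lemma pow_mono_step {x : A} {ε : ℝ} {k m : ℕ} (hkm : k ≤ m)
    (h : ‖x ^ (2 ^ k)‖ < ε ^ (2 ^ k)) : ‖x ^ (2 ^ m)‖ < ε ^ (2 ^ m) := by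
  induction m, hkm using Nat.le_induction with
  | base => exact h
  | succ m _ ih =>
    rw [pow_succ 2 m, pow_mul, pow_mul ε]
    exact (norm_pow_le _ 2).trans_lt (pow_lt_pow_left₀ ih (norm_nonneg _) two_ne_zero)

/-- Dini plus the maximum principle. -/
lemma qn_inside (y c : A) {S : ℝ} (hS : 1 ≤ S)
    (h : ∀ s : ℂ, ‖s‖ = S → spectralRadius ℂ (y + s • c) = 0) {ε : ℝ} (hε : 0 < ε) :
    ∃ k : ℕ, ‖(y + c) ^ (2 ^ k)‖ ≤ ε ^ (2 ^ k) := by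
  have hcont : ∀ k : ℕ, Continuous fun s : ℂ => ‖(y + s • c) ^ (2 ^ k)‖ := fun k => by fun_prop
  obtain ⟨k, hk⟩ := (isCompact_sphere (0 : ℂ) S).elim_directed_cover
    (fun k : ℕ => {s : ℂ | ‖(y + s • c) ^ (2 ^ k)‖ < ε ^ (2 ^ k)})
    (fun k => isOpen_lt (hcont k) continuous_const)
    (fun s hs => by
      obtain ⟨k, hk⟩ := qn_exists (h s (by simpa using hs)) hε
      exact Set.mem_iUnion.2 ⟨k, hk⟩)
    (directed_of_isDirected_le fun k m hkm s hs => pow_mono_step hkm hs)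
  refine ⟨k, ?_⟩
  have hd : Differentiable ℂ fun s : ℂ => (y + s • c) ^ (2 ^ k) := by fun_prop
  have := Complex.norm_le_of_forall_mem_frontier_norm_le (U := Metric.ball (0 : ℂ) S)
    Metric.isBounded_ball hd.diffContOnCl (C := ε ^ (2 ^ k)) (z := 1)
    (fun z hz => by
      have : z ∈ Metric.sphere (0 : ℂ) S := by
        rwa [frontier_ball _ (by positivity)] at hz
      exact (hk this).le)
    (by rw [closure_ball _ (by positivity)]; simpa using hS)
  simpa using this

lemma maximal_closed (L : Ideal A) (hL : L.IsMaximal) : IsClosed (L : Set A) := by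
  exact Ideal.IsMaximal.isClosed

/-- Schur's lemma with Gelfand-Mazur. -/
lemma schur (L : Ideal A) (hL : L.IsMaximal) (c : A) (hc : ∀ w ∈ L, w * c ∈ L) :
    ∃ μ : ℂ, c - algebraMap ℂ A μ ∈ L := by
  by_contra! hcon
  let P : Submodule ℂ A := L.restrictScalars ℂ
  have hcl : IsClosed (P : Set A) := maximal_closed L hL
  let R : A →L[ℂ] A := (ContinuousLinearMap.mul ℂ A).flip c
  let T : (A ⧸ P) →L[ℂ] (A ⧸ P) := P.liftQL (P.mkQL.comp R) (fun w hw => by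
    change P.mkQ (w * c) = 0
    exact (Submodule.Quotient.mk_eq_zero P).2 (hc w hw))
  have hT : ∀ w : A, T (Submodule.Quotient.mk w) = Submodule.Quotient.mk (w * c) := fun w => rfl
  have hmem : ∀ w : A, w ∈ P ↔ w ∈ L := fun w => Iff.rfl
  have : Nontrivial (A ⧸ P) := by
    refine ⟨Submodule.Quotient.mk 1, 0, fun h => hL.ne_top ?_⟩
    rw [Submodule.Quotient.mk_eq_zero, hmem] at h
    exact (Ideal.eq_top_iff_one L).2 h
  obtain ⟨μ, hμ⟩ := spectrum.nonempty T
  apply hμ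
  have hval : ∀ w : A, (algebraMap ℂ ((A ⧸ P) →L[ℂ] (A ⧸ P)) μ - T) (Submodule.Quotient.mk w)
      = Submodule.Quotient.mk (-(w * (c - algebraMap ℂ A μ))) := by
    intro w
    rw [sub_apply, hT, Algebra.algebraMap_eq_smul_one,
      smul_apply, one_apply_eq_self,
      ← Submodule.Quotient.mk_smul, ← Submodule.Quotient.mk_sub]
    congr 1
    rw [mul_sub, ← Algebra.commutes, Algebra.smul_def]
    abel
  have hbij : Function.Bijective (algebraMap ℂ ((A ⧸ P) →L[ℂ] (A ⧸ P)) μ - T) := by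
    constructor
    · rw [injective_iff_map_eq_zero]
      intro q hq
      obtain ⟨w, rfl⟩ := Submodule.Quotient.mk_surjective P q
      rw [hval, Submodule.Quotient.mk_eq_zero, hmem, neg_mem_iff] at hq
      rw [Submodule.Quotient.mk_eq_zero, hmem]
      by_contra hw
      obtain ⟨v, l, hl, hvl⟩ : ∃ v : A, ∃ l ∈ L, v * w + l = 1 := by
        have h1 : L ⊔ Ideal.span {w} = ⊤ := by
          apply hL.1.2
          rw [left_lt_sup]
          exact fun h => hw (h (Ideal.mem_span_singleton_self w))
        have h2 : (1 : A) ∈ L ⊔ Ideal.span {w} := h1 ▸ Submodule.mem_top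
        obtain ⟨l, hl, z, hz, e⟩ := Submodule.mem_sup.1 h2
        obtain ⟨v, rfl⟩ := Ideal.mem_span_singleton'.1 hz
        exact ⟨v, l, hl, by rw [add_comm]; exact e⟩
      apply hcon μ
      have e : c - algebraMap ℂ A μ = v * (w * (c - algebraMap ℂ A μ)) +
          (l * c - algebraMap ℂ A μ * l) := by
        rw [Algebra.commutes, ← mul_sub, ← mul_assoc, ← add_mul, hvl, one_mul]
      rw [e]
      exact L.add_mem (L.mul_mem_left _ hq) (L.sub_mem (hc l hl) (L.mul_mem_left _ hl))
    · intro q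
      obtain ⟨z, rfl⟩ := Submodule.Quotient.mk_surjective P q
      have h1 : L ⊔ Ideal.span {c - algebraMap ℂ A μ} = ⊤ := by
        apply hL.1.2
        rw [left_lt_sup]
        exact fun h => hcon μ (h (Ideal.mem_span_singleton_self _))
      have h2 : z ∈ L ⊔ Ideal.span {c - algebraMap ℂ A μ} := h1 ▸ Submodule.mem_top
      obtain ⟨l, hl, x, hx, e⟩ := Submodule.mem_sup.1 h2
      obtain ⟨v, rfl⟩ := Ideal.mem_span_singleton'.1 hx
      refine ⟨Submodule.Quotient.mk (-v), ?_⟩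
      rw [hval, Submodule.Quotient.eq, hmem, ← e]
      simpa using hl
  exact ContinuousLinearMap.isUnit_iff_bijective.2 hbij

lemma mem_spectrum_of_mem (L : Ideal A) (hL : L.IsMaximal) {x : A} {μ : ℂ}
    (h : x - algebraMap ℂ A μ ∈ L) : μ ∈ spectrum ℂ x := by
  intro hu
  apply hL.ne_top
  refine L.eq_top_of_isUnit_mem ?_ hu
  rw [← neg_sub]
  exact L.neg_mem h

lemma eq_zero_of_mem_spectrum {x : A} (hx : spectralRadius ℂ x = 0) {μ : ℂ}
    (h : μ ∈ spectrum ℂ x) : μ = 0 := by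
  rw [spectralRadius] at hx
  simp only [ENNReal.iSup_eq_zero] at hx
  simpa using hx μ h

lemma exists_witness (L : Ideal A) (hL : L.IsMaximal) (c : A) (hcL : c ∉ L)
    (hc : spectralRadius ℂ c = 0) :
    ∃ (u : Aˣ) (t : ℂ), t ≠ 0 ∧ t ∈ spectrum ℂ (-(↑u⁻¹ * c * ↑u) + c) := by
  have h1 : ∃ w ∈ L, w * c ∉ L := by
    by_contra! hcon
    obtain ⟨μ, hμ⟩ := schur L hL c hcon
    have := eq_zero_of_mem_spectrum hc (mem_spectrum_of_mem L hL hμ)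
    subst this
    exact hcL (by simpa using hμ)
  obtain ⟨w₀, hw₀, hw₀c⟩ := h1
  obtain ⟨w, hw, hwc⟩ : ∃ w ∈ L, w * c - 1 ∈ L := by
    have h1 : L ⊔ Ideal.span {w₀ * c} = ⊤ := by
      apply hL.1.2
      rw [left_lt_sup]
      exact fun h => hw₀c (h (Ideal.mem_span_singleton_self _))
    have h2 : (1 : A) ∈ L ⊔ Ideal.span {w₀ * c} := h1 ▸ Submodule.mem_top
    obtain ⟨l, hl, z, hz, e⟩ := Submodule.mem_sup.1 h2
    obtain ⟨v, rfl⟩ := Ideal.mem_span_singleton'.1 hz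
    refine ⟨v * w₀, L.mul_mem_left _ hw₀, ?_⟩
    rw [← e]
    have : v * w₀ * c - (l + v * (w₀ * c)) = -l := by rw [mul_assoc]; abel
    rw [this]
    exact L.neg_mem hl
  obtain ⟨t, ht, hu⟩ : ∃ t : ℂ, t ≠ 0 ∧ IsUnit (1 + t • w) := by
    have hopen : IsOpen {t : ℂ | IsUnit (1 + t • w)} :=
      Units.isOpen.preimage (by fun_prop : Continuous fun t : ℂ => 1 + t • w)
    have h0 : {t : ℂ | IsUnit (1 + t • w)} ∈ 𝓝 (0 : ℂ) := hopen.mem_nhds (by simp)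
    have h3 : ∀ᶠ t in 𝓝[≠] (0 : ℂ), IsUnit (1 + t • w) := mem_nhdsWithin_of_mem_nhds h0
    obtain ⟨t, h4, h5⟩ := (h3.and self_mem_nhdsWithin).exists
    exact ⟨t, h5, h4⟩
  obtain ⟨u, hu⟩ := hu
  refine ⟨u, t, ht, mem_spectrum_of_mem L hL ?_⟩
  have hs : ∀ (s : ℂ) (x : A), x ∈ L → s • x ∈ L := fun s x hx => by
    rw [Algebra.smul_def]; exact L.mul_mem_left _ hx
  have e1 : (u : A) * (c - algebraMap ℂ A t) - c ∈ L := by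
    have : (u : A) * (c - algebraMap ℂ A t) - c = t • (w * c - 1) - (t * t) • w := by
      rw [hu, Algebra.algebraMap_eq_smul_one]
      simp only [mul_sub, add_mul, one_mul, smul_mul_assoc, mul_smul_comm, mul_one, smul_sub,
        smul_add, smul_smul]
      abel
    rw [this]
    exact L.sub_mem (hs _ _ hwc) (hs _ _ hw)
  have e2 : c * u - c ∈ L := by
    have : c * (u : A) - c = t • (c * w) := by
      rw [hu, mul_add, mul_one, mul_smul_comm]; abel
    rw [this]
    exact hs _ _ (L.mul_mem_left _ hw)
  have e3 := L.mul_mem_left (↑u⁻¹ : A) (L.sub_mem e1 e2)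
  have : (↑u⁻¹ : A) * ((u : A) * (c - algebraMap ℂ A t) - c - (c * u - c)) =
      -(↑u⁻¹ * c * ↑u) + c - algebraMap ℂ A t := by
    rw [mul_sub, mul_sub, Units.inv_mul_cancel_left, mul_sub, mul_assoc]
    abel
  rwa [this] at e3

end helpers

theorem uniqueness_spectral_radius_translation
    {A : Type*} [NormedRing A] [NormOneClass A] [NormedAlgebra ℂ A] [CompleteSpace A]
    (hss : JacobsonSemisimple A) (a b : A) :
    a = b ↔ ∃ U : Set A, IsOpen U ∧ -b ∈ U ∧
      ∀ x ∈ U, spectralRadius ℂ (a + x) ≤ spectralRadius ℂ (b + x) := by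
  constructor
  · rintro rfl
    exact ⟨Set.univ, isOpen_univ, trivial, fun _ _ => le_rfl⟩
  rintro ⟨U, hU, hbU, h⟩
  have : Nontrivial A := NormOneClass.nontrivial (G := A)
  by_contra hab
  set c := a - b with hcdef
  have hc0 : c ≠ 0 := sub_ne_zero.2 hab
  obtain ⟨r, hr, hball⟩ := Metric.isOpen_iff.1 hU _ hbU
  -- translated hypothesis
  have key : ∀ y : A, ‖y‖ < r → spectralRadius ℂ (c + y) ≤ spectralRadius ℂ y := by
    intro y hy
    have := h (-b + y) (hball (by simpa using hy))
    have e1 : a + (-b + y) = c + y := by rw [hcdef]; abel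
    have e2 : b + (-b + y) = y := by abel
    rwa [e1, e2] at this
  have hcq : spectralRadius ℂ c = 0 := by
    have := key 0 (by simpa using hr)
    simpa using this
  obtain ⟨L, hL, hcL⟩ : ∃ L : Ideal A, L.IsMaximal ∧ c ∉ L := by
    by_contra! hcon
    apply hc0
    have : c ∈ TwoSidedIdeal.jacobson (⊥ : TwoSidedIdeal A) := by
      rw [← TwoSidedIdeal.mem_asIdeal, TwoSidedIdeal.asIdeal_jacobson, Ideal.jacobson,
        Submodule.mem_sInf]
      exact fun J hJ => hcon J hJ.2
    rw [hss] at this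
    simpa [TwoSidedIdeal.mem_bot] using this
  obtain ⟨u, t, ht, hspec⟩ := exists_witness L hL c hcL hcq
  set y : A := -(↑u⁻¹ * c * ↑u) with hy
  have hyq : spectralRadius ℂ y = 0 := by
    have h1 : spectralRadius ℂ ((↑u⁻¹ : A) * c * ↑u) = 0 := by
      rw [spectralRadius, spectrum.units_conjugate']
      exact hcq
    have := qn_smul h1 (-1)
    simpa [hy] using this
  let S : ℝ := 1 + ‖y‖ / r
  have hS : 1 ≤ S := by simp only [S]; have : 0 ≤ ‖y‖ / r := by positivity
                        linarith
  have hsph : ∀ s : ℂ, ‖s‖ = S → spectralRadius ℂ (y + s • c) = 0 := by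
    intro s hs
    have hs0 : s ≠ 0 := by
      rintro rfl
      rw [norm_zero] at hs
      linarith
    have h1 : ‖s⁻¹ • y‖ < r := by
      rw [norm_smul, norm_inv, hs, inv_mul_lt_iff₀ (by linarith)]
      simp only [S]
      rw [add_mul, div_mul_cancel₀ _ hr.ne']
      linarith
    have h2 := key _ h1
    rw [qn_smul hyq, nonpos_iff_eq_zero] at h2
    have h3 := qn_smul h2 s
    rwa [smul_add, smul_smul, mul_inv_cancel₀ hs0, one_smul, add_comm] at h3
  have htn : 0 < ‖t‖ := norm_pos_iff.2 ht
  obtain ⟨k, hk⟩ := qn_inside y c hS hsph (half_pos htn)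
  have h5 := spectrum.norm_le_norm_of_mem (spectrum.pow_mem_pow (y + c) (2 ^ k) hspec)
  rw [norm_pow] at h5
  have h6 : (‖t‖ / 2) ^ (2 ^ k) < ‖t‖ ^ (2 ^ k) :=
    pow_lt_pow_left₀ (half_lt_self htn) (by positivity) (by positivity)
  linarith
end
end

section
/- Let A be a complex semisimple unital Banach algebra and let a, b ∈ Soc A. Then a = b if and only if σ(ax) = σ(bx) for every rank one element x ∈ A. -/
open Complex

noncomputable section

theorem aux_pow_le {A : Type*} [NormedRing A] [NormedAlgebra ℂ A] [CompleteSpace A]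
    (x : A) (hx : nzSpec x = ∅) (ε : ℝ) (hε : 0 < ε) :
    ∀ᶠ n : ℕ in Filter.atTop, ‖x ^ n‖ ≤ ε ^ n := by
  have hr : spectralRadius ℂ x = 0 := by
    unfold spectralRadius
    simp only [ENNReal.iSup_eq_zero]
    intro k hk
    by_contra h
    have : k ∈ nzSpec x := ⟨hk, fun h0 => h (by simp [Set.mem_singleton_iff.1 h0])⟩
    rw [hx] at this
    exact this
  have ht := spectrum.pow_norm_pow_one_div_tendsto_nhds_spectralRadius x
  rw [hr] at ht
  have h1 := ht.eventually (gt_mem_nhds (ENNReal.ofReal_pos.2 hε))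
  filter_upwards [h1, Filter.eventually_gt_atTop 0] with n hn hn0
  have h2 := (ENNReal.ofReal_lt_ofReal_iff hε).1 hn
  have h3 := Real.rpow_le_rpow (by positivity) h2.le (Nat.cast_nonneg n)
  rw [← Real.rpow_mul (norm_nonneg _), one_div, inv_mul_cancel₀ (by positivity), Real.rpow_one,
    Real.rpow_natCast] at h3
  exact h3

theorem aux_catalan {A : Type*} [NormedRing A] [NormedAlgebra ℂ A] [CompleteSpace A]
    (x : A) (hx : nzSpec x = ∅) :
    ∃ c : A, c = 1 + x * (c * c) ∧ ∀ e, Commute e x → Commute e c := by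
  let T : ℕ → A := fun n => (catalan n : ℂ) • x ^ n
  have hs : Summable fun n => ‖T n‖ := by
    have h8 := aux_pow_le x hx (1/8) (by norm_num)
    have hg : Summable fun n : ℕ => (1/2 : ℝ) ^ n :=
      summable_geometric_of_lt_one (by norm_num) (by norm_num)
    refine Summable.of_norm_bounded_eventually_nat hg ?_
    filter_upwards [h8] with n hn
    have hc : (catalan n : ℝ) ≤ 4 ^ n := by
      have h1 := succ_mul_catalan_eq_centralBinom n
      have h2 := Nat.centralBinom_le_four_pow n
      have h3 : catalan n ≤ 4 ^ n := by nlinarith [Nat.zero_le (n * catalan n)]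
      exact_mod_cast h3
    calc ‖‖T n‖‖ = (catalan n : ℝ) * ‖x ^ n‖ := by simp [T, norm_smul]
      _ ≤ 4 ^ n * (1/8) ^ n := by gcongr
      _ = (1/2) ^ n := by rw [← mul_pow]; norm_num
  have hsT : Summable T := hs.of_norm
  refine ⟨∑' n, T n, ?_, ?_⟩
  · rw [tsum_mul_tsum_eq_tsum_sum_antidiagonal_of_summable_norm hs hs]
    have hs2 := (summable_norm_sum_mul_antidiagonal_of_summable_norm hs hs).of_norm
    rw [← hs2.tsum_mul_left, hsT.tsum_eq_zero_add]
    congr 1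
    · simp [T]
    · refine tsum_congr fun n => ?_
      simp only [T]
      rw [catalan_succ', Nat.cast_sum, Finset.sum_smul, Finset.mul_sum]
      refine Finset.sum_congr rfl fun ij hij => ?_
      rw [← Finset.HasAntidiagonal.mem_antidiagonal.1 hij, smul_mul_smul_comm, ← pow_add, mul_smul_comm,
        ← pow_succ']
      push_cast
      rfl
  · intro e he
    refine Commute.tsum_right _ fun n => ?_
    exact (he.pow_right n).smul_right _

theorem aux_idem {A : Type*} [NormedRing A] [NormedAlgebra ℂ A] [CompleteSpace A]
    (e : A) (hx : nzSpec (e - e * e) = ∅) :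
    ∃ k l : A, Commute e k ∧ Commute e l ∧ (e * k) * (e * k) = e * k ∧
      1 - e * k = (1 - e) * l := by
  obtain ⟨c, hc, hcomm⟩ := aux_catalan (e - e * e) hx
  have hex : Commute e (e - e * e) := (Commute.refl e).sub_right ((Commute.refl e).mul_right (Commute.refl e))
  have hec : Commute e c := hcomm e hex
  set x := e - e * e with hxdef
  have hxc : Commute x c := hcomm x (Commute.refl x)
  have hu : IsUnit (1 - 2 * (x * c)) := by
    have h4 : IsUnit (1 - 4 * x) := by
      have : (1/4 : ℂ) ∉ spectrum ℂ x := fun h => by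
        have : (1/4 : ℂ) ∈ nzSpec x := ⟨h, by norm_num⟩
        rw [hx] at this; exact this
      rw [spectrum.notMem_iff] at this
      have h2 := (IsUnit.mk0 (4:ℂ) (by norm_num)).map (algebraMap ℂ A) |>.mul this
      convert h2 using 1
      have h44 : algebraMap ℂ A 4 * algebraMap ℂ A (1/4) = 1 := by
        rw [← map_mul]; norm_num
      rw [mul_sub (algebraMap ℂ A 4), h44, map_ofNat]
    have : (1 - 2 * (x * c)) * (1 - 2 * (x * c)) = 1 - 4 * x := by
      have h5 : x * c * (x * c) = x * c - x := by
        have : x * c = x + x * (x * (c * c)) := by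
          conv_lhs => rw [hc]
          rw [mul_add, mul_one]
        rw [mul_assoc, ← mul_assoc c x c, ← hxc.eq, mul_assoc x c c]
        conv_rhs => rw [this]
        simp
      have : (1 - 2 * (x * c)) * (1 - 2 * (x * c)) = 1 - 4 * (x * c) + 4 * (x * c * (x * c)) := by
        noncomm_ring
      rw [this, h5]; noncomm_ring
    exact ((Commute.refl _).isUnit_mul_iff.1 (this ▸ h4)).1
  obtain ⟨u, hu⟩ := hu
  have hey : Commute e (x * c) := hex.mul_right hec
  have heu : Commute e (u : A) := by
    rw [hu]
    exact (Commute.one_right e).sub_right ((Commute.ofNat_right e 2).mul_right hey)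
  have heui : Commute e (↑u⁻¹ : A) := heu.units_inv_right
  have hcui : Commute c (↑u⁻¹ : A) := by
    apply Commute.units_inv_right
    rw [hu]
    exact (Commute.one_right c).sub_right ((Commute.ofNat_right c 2).mul_right
      (hxc.symm.mul_right (Commute.refl c)))
  set v : A := ↑u⁻¹ with hv
  have huv : (1 - 2 * (x * c)) * v = 1 := by rw [← hu, hv]; simp
  have e1 : Commute e (1 - (1 - e) * c) :=
    (Commute.one_right e).sub_right (((Commute.one_right e).sub_right (Commute.refl e)).mul_right hec)
  have e2 : Commute e (1 - e * c) :=
    (Commute.one_right e).sub_right ((Commute.refl e).mul_right hec)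
  have hq1 : 1 - e * ((1 - (1 - e) * c) * v) = (1 - e) * ((1 - e * c) * v) := by
    have : (1:A) = (1 - 2 * ((e - e * e) * c)) * v := by rw [← hxdef, huv]
    have h2 : e * ((1 - (1 - e) * c) * v) + (1 - e) * ((1 - e * c) * v)
        = (1 - 2 * ((e - e * e) * c)) * v := by noncomm_ring
    rw [sub_eq_iff_eq_add', h2, ← this]
  refine ⟨(1 - (1 - e) * c) * v, (1 - e * c) * v, e1.mul_right heui, e2.mul_right heui, ?_, hq1⟩
  -- q * (1 - q) = 0
  suffices h : (e * ((1 - (1 - e) * c) * v)) * (1 - e * ((1 - (1 - e) * c) * v)) = 0 by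
    rw [mul_sub, mul_one, sub_eq_zero] at h; exact h.symm
  rw [hq1]
  have hvr : Commute v ((1 - e) * (1 - e * c)) := by
    have a1 : Commute v e := heui.symm
    have a2 : Commute v c := hcui.symm
    have a3 := Commute.one_right v
    exact (a3.sub_right a1).mul_right (a3.sub_right (a1.mul_right a2))
  have h1 : e * (1 - (1 - e) * c) * ((1 - e) * (1 - e * c)) = 0 := by
    have hce : c * e = e * c := hec.eq.symm
    have hy : x * c = x + x * c * (x * c) := by
      conv_lhs => rw [hc]
      rw [mul_add, mul_one, mul_assoc x c, ← mul_assoc c x c, ← hxc.eq, mul_assoc x c c]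
    have p1 : e * (1 - (1 - e) * c) = e - x * c := by rw [hxdef]; noncomm_ring
    have p2 : (1 - e) * (1 - e * c) = 1 - e - x * c := by rw [hxdef]; noncomm_ring
    rw [p1, p2]
    have : (e - x * c) * (1 - e - x * c) = (e - e * e) - x * c + x * c * (x * c)
      + (x * c * e - e * (x * c)) := by noncomm_ring
    rw [this, hey.eq, sub_self, ← hxdef, add_zero]
    have hy2 : x * c * (x * c) = x * c - x := by rw [eq_sub_iff_add_eq', ← hy]
    rw [hy2]
    abel
  calc _ = (e * (1 - (1 - e) * c)) * (v * ((1 - e) * (1 - e * c))) * v := by noncomm_ring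
    _ = (e * (1 - (1 - e) * c) * ((1 - e) * (1 - e * c))) * v * v := by
      rw [hvr.eq]; noncomm_ring
    _ = 0 := by rw [h1]; simp

open Polynomial in
theorem aux_riesz {A : Type*} [NormedRing A] [NormedAlgebra ℂ A] [CompleteSpace A] [Nontrivial A]
    (w : A) (hfin : (nzSpec w).Finite) (hne : (nzSpec w).Nonempty) :
    ∃ q u v : A, q * q = q ∧ q ≠ 0 ∧ q = w * u ∧ q = v * w := by
  obtain ⟨l, hl, hl0⟩ := hne
  have hl0 : l ≠ 0 := hl0
  classical
  let S := hfin.toFinset.erase l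
  let g : ℂ[X] := ∏ z ∈ S, (X - C z)
  have hg : g.eval l ≠ 0 := by
    simp only [g, eval_prod]
    refine Finset.prod_ne_zero_iff.2 fun z hz => ?_
    have := (Finset.mem_erase.1 hz).1
    simpa [sub_eq_zero] using this.symm
  let f : ℂ[X] := X * (C (l * g.eval l)⁻¹ * g)
  have hfl : f.eval l = 1 := by
    simp [f]; field_simp
  have hf : ∀ z ∈ spectrum ℂ w, f.eval z = 0 ∨ f.eval z = 1 := by
    intro z hz
    by_cases h0 : z = 0
    · left; simp [f, h0]
    by_cases h1 : z = l
    · right; rw [h1, hfl]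
    left
    have hzS : z ∈ S := Finset.mem_erase.2 ⟨h1, hfin.mem_toFinset.2 ⟨hz, h0⟩⟩
    have : g.eval z = 0 := by
      simp only [g, eval_prod]
      exact Finset.prod_eq_zero hzS (by simp)
    simp [f, this]
  have hx : nzSpec (aeval w f - aeval w f * aeval w f) = ∅ := by
    have : aeval w f - aeval w f * aeval w f = aeval w (f - f * f) := by simp
    rw [this, nzSpec, spectrum.map_polynomial_aeval]
    rw [Set.eq_empty_iff_forall_notMem]
    rintro _ ⟨⟨z, hz, rfl⟩, h⟩
    apply h
    rcases hf z hz with h | h <;> simp [h]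
  obtain ⟨k, m, hk, hm, hq, hq1⟩ := aux_idem _ hx
  have hw : aeval w f = w * aeval w (C (l * g.eval l)⁻¹ * g) := by simp [f]
  have hw2 : aeval w f = aeval w (C (l * g.eval l)⁻¹ * g) * w := by
    simp only [f]; rw [mul_comm]; simp
  refine ⟨aeval w f * k, aeval w (C (l * g.eval l)⁻¹ * g) * k, k * aeval w (C (l * g.eval l)⁻¹ * g),
    hq, ?_, ?_, ?_⟩
  · intro h0
    rw [h0, sub_zero] at hq1
    have h1 : (1:ℂ) ∈ spectrum ℂ (aeval w f) := by
      rw [spectrum.map_polynomial_aeval]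
      exact ⟨l, hl, hfl⟩
    rw [spectrum.mem_iff] at h1
    apply h1
    have hc : Commute (1 - aeval w f) m := (Commute.one_left m).sub_left hm
    rw [map_one]
    exact (hc.isUnit_mul_iff.1 (hq1 ▸ isUnit_one)).1
  · conv_lhs => rw [hw]
    rw [mul_assoc]
  · rw [hk.eq]; conv_lhs => rw [hw2]
    rw [mul_assoc]

theorem nz_comm {A : Type*} [Ring A] [Algebra ℂ A] (x y : A) :
    nzSpec (x * y) = nzSpec (y * x) := spectrum.nonzero_mul_comm x y

theorem nz_unit {A : Type*} [Ring A] [Algebra ℂ A] {x : A} (h : nzSpec x = ∅) (k : ℂ)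
    (hk : k ≠ 0) : IsUnit (algebraMap ℂ A k - x) := by
  by_contra hn
  have : k ∈ nzSpec x := ⟨hn, hk⟩
  rw [h] at this
  exact this

theorem ss_zero {A : Type*} [Ring A] [Algebra ℂ A] (hss : JacobsonSemisimple A) (c : A)
    (h : ∀ y, nzSpec (y * c) = ∅) : c = 0 := by
  have : c ∈ TwoSidedIdeal.jacobson (⊥ : TwoSidedIdeal A) := by
    rw [TwoSidedIdeal.mem_jacobson_iff]
    intro y
    obtain ⟨u, hu⟩ := nz_unit (h (-y)) 1 one_ne_zero
    refine ⟨(↑u⁻¹ : A), ?_⟩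
    have h1 : (↑u⁻¹ : A) * u = 1 := u.inv_mul
    rw [hu] at h1
    have : (↑u⁻¹ : A) * y * c + ↑u⁻¹ - 1 = 0 := by
      rw [sub_eq_zero, ← h1]
      simp [mul_add, mul_assoc, add_comm]
    rw [this]
    exact TwoSidedIdeal.zero_mem _
  rw [hss] at this
  simpa using this

theorem nz_zero {A : Type*} [Ring A] [Algebra ℂ A] [Nontrivial A] : nzSpec (0 : A) = ∅ := by
  simp [nzSpec, spectrum.zero_eq]

theorem nz_smul_idem {A : Type*} [Ring A] [Algebra ℂ A] (p : A) (hp : p * p = p)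
    (hp0 : p ≠ 0) (k : ℂ) : nzSpec (k • p) = {k} \ {0} := by
  ext z
  constructor
  · rintro ⟨hz, hz0⟩
    refine ⟨?_, hz0⟩
    have hz0 : z ≠ 0 := hz0
    by_contra hzk
    have hzk : z - k ≠ 0 := sub_ne_zero.2 hzk
    rw [spectrum.mem_iff] at hz
    apply hz
    have h1 : (algebraMap ℂ A z - k • p) * (z⁻¹ • (1 - p) + (z - k)⁻¹ • p) = 1 := by
      simp only [Algebra.algebraMap_eq_smul_one, sub_mul, mul_add, mul_sub, smul_mul_smul_comm,
        one_mul, mul_one, hp, sub_self, smul_zero, smul_sub, mul_inv_cancel₀ hz0]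
      have : (z * (z - k)⁻¹) = 1 + k * (z - k)⁻¹ := by field_simp; ring
      rw [this]
      module
    have h2 : (z⁻¹ • (1 - p) + (z - k)⁻¹ • p) * (algebraMap ℂ A z - k • p) = 1 := by
      simp only [Algebra.algebraMap_eq_smul_one, mul_sub, add_mul, sub_mul, smul_mul_smul_comm,
        one_mul, mul_one, hp, sub_self, smul_zero, smul_sub, inv_mul_cancel₀ hz0]
      have : ((z - k)⁻¹ * z) = 1 + (z - k)⁻¹ * k := by field_simp; ring
      rw [this]
      module
    exact ⟨⟨_, _, h1, h2⟩, rfl⟩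
  · rintro ⟨hz, hz0⟩
    rw [Set.mem_singleton_iff] at hz
    subst hz
    refine ⟨?_, hz0⟩
    rw [spectrum.mem_iff]
    intro hu
    apply hp0
    have : (algebraMap ℂ A z - z • p) * p = 0 := by
      simp [Algebra.algebraMap_eq_smul_one, sub_mul, hp]
    exact hu.mul_right_eq_zero.1 this

/-- minimal idempotents -/
def MinIdem {A : Type*} [Ring A] [Algebra ℂ A] (p : A) : Prop :=
  p * p = p ∧ p ≠ 0 ∧ ∀ y : A, ∃ k : ℂ, p * y * p = k • p

theorem nz_fin {A : Type*} [Ring A] [Algebra ℂ A] {a : A} (ha : a ∈ socle A) {w : A}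
    (hw : w ∈ Ideal.span {a}) : (nzSpec w).Finite := by
  obtain ⟨y, rfl⟩ := Ideal.mem_span_singleton'.1 hw
  have h1 : (nzSpec (y * a)).encard ≤ srank a := le_iSup (fun x => (nzSpec (x * a)).encard) y
  exact Set.encard_ne_top_iff.1 (ne_top_of_le_ne_top ha h1)

/-- An idempotent in `Aa` without proper nonzero subidempotents is minimal. -/
theorem min_of_no_sub {A : Type*} [NormedRing A] [NormedAlgebra ℂ A] [CompleteSpace A]
    [Nontrivial A] (hss : JacobsonSemisimple A) {a : A} (ha : a ∈ socle A) (p : A)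
    (hp : p * p = p) (hp0 : p ≠ 0) (hpa : p ∈ Ideal.span {a})
    (hsub : ∀ q : A, q * q = q → p * q = q → q * p = q → q ≠ 0 → q = p) : MinIdem p := by
  have hinv : ∀ w : A, p * w = w → w * p = w → (nzSpec w).Nonempty →
      ∃ u v, p = w * u ∧ p = v * w := by
    intro w h1 h2 hne
    have hwa : w ∈ Ideal.span {a} := by
      rw [← h2]; exact Ideal.mul_mem_left _ _ hpa
    obtain ⟨q, u, v, hq, hq0, hqu, hqv⟩ := aux_riesz w (nz_fin ha hwa) hne
    have : q = p := hsub q hq (by rw [hqu, ← mul_assoc, h1]) (by rw [hqv, mul_assoc, h2]) hq0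
    exact ⟨u, v, this ▸ hqu, this ▸ hqv⟩
  have hqn : ∀ w : A, p * w = w → w * p = w → nzSpec w = ∅ → w = 0 := by
    intro w h1 h2 hw
    apply ss_zero hss
    intro y
    by_contra hne
    have hne := Set.nonempty_iff_ne_empty.2 hne
    rw [← h2, ← mul_assoc, nz_comm] at hne
    have h3 : p * (y * w) = (p * y * p) * w := by
      rw [mul_assoc (p * y), h1, mul_assoc]
    rw [h3] at hne
    obtain ⟨-, v, -, hv⟩ := hinv (p * y * p * w) (by simp only [← mul_assoc, hp])
      (by rw [mul_assoc, h2]) hne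
    set u := v * (p * y * p) with hu
    have huw : u * w = p := by rw [hu, mul_assoc, ← hv]
    have hpow : ∀ n : ℕ, u ^ (n + 1) * w ^ (n + 1) = p := by
      intro n
      induction n with
      | zero => simpa using huw
      | succ n ih =>
        rw [pow_succ, pow_succ' w (n + 1), mul_assoc, ← mul_assoc u w, huw, pow_succ' w n,
          ← mul_assoc p, h1, ← pow_succ', ih]
    have hε : (0:ℝ) < (1 / (2 * (‖u‖ + 1))) := by positivity
    have hev := aux_pow_le w hw _ hε
    have hlim : Filter.Tendsto (fun n : ℕ => (1/2 : ℝ) ^ n) Filter.atTop (nhds 0) :=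
      tendsto_pow_atTop_nhds_zero_of_lt_one (by norm_num) (by norm_num)
    have hpn : 0 < ‖p‖ := norm_pos_iff.2 hp0
    obtain ⟨n, ⟨hn1, hn2⟩, hn3⟩ :=
      ((hev.and (hlim.eventually (gt_mem_nhds hpn))).and (Filter.eventually_gt_atTop 0)).exists
    obtain ⟨m, rfl⟩ : ∃ m, n = m + 1 := ⟨n - 1, by omega⟩
    have : ‖p‖ ≤ (1/2 : ℝ) ^ (m + 1) := by
      calc ‖p‖ = ‖u ^ (m + 1) * w ^ (m + 1)‖ := by rw [hpow]
        _ ≤ ‖u ^ (m + 1)‖ * ‖w ^ (m + 1)‖ := norm_mul_le _ _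
        _ ≤ ‖u‖ ^ (m + 1) * (1 / (2 * (‖u‖ + 1))) ^ (m + 1) := by
          gcongr
          exact norm_pow_le' _ (Nat.succ_pos m)
        _ = (‖u‖ * (1 / (2 * (‖u‖ + 1)))) ^ (m + 1) := by rw [mul_pow]
        _ ≤ (1/2 : ℝ) ^ (m + 1) := by
          gcongr
          rw [mul_one_div, div_le_div_iff₀ (by positivity) (by norm_num)]
          linarith
    linarith
  refine ⟨hp, hp0, fun y => ?_⟩
  set w := p * y * p with hw
  have h1 : p * w = w := by simp only [hw, ← mul_assoc, hp]
  have h2 : w * p = w := by simp only [hw, mul_assoc, hp]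
  by_cases hne : nzSpec w = ∅
  · exact ⟨0, by rw [hqn w h1 h2 hne, zero_smul]⟩
  obtain ⟨l, hl, hl0⟩ := Set.nonempty_iff_ne_empty.2 hne
  have hl0 : l ≠ 0 := hl0
  refine ⟨l, ?_⟩
  rw [← sub_eq_zero]
  have g1 : p * (w - l • p) = w - l • p := by rw [mul_sub, h1, mul_smul_comm, hp]
  have g2 : (w - l • p) * p = w - l • p := by rw [sub_mul, h2, smul_mul_assoc, hp]
  apply hqn _ g1 g2
  by_contra hne2
  obtain ⟨u, v, hu, hv⟩ := hinv _ g1 g2 (Set.nonempty_iff_ne_empty.2 hne2)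
  rw [spectrum.mem_iff] at hl
  apply hl
  have hd : algebraMap ℂ A l - w = l • (1 - p) - (w - l • p) := by
    rw [Algebra.algebraMap_eq_smul_one]; module
  set d := w - l • p with hdd
  have k1 : (1 - p) * d = 0 := by rw [sub_mul, one_mul, g1, sub_self]
  have k2 : d * (1 - p) = 0 := by rw [mul_sub, mul_one, g2, sub_self]
  have k3 : (1 - p) * (1 - p) = 1 - p := by
    rw [mul_sub, mul_one, sub_mul, one_mul, hp, sub_self, sub_zero]
  have k4 : (1 - p) * p = 0 := by rw [sub_mul, one_mul, hp, sub_self]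
  have k5 : p * (1 - p) = 0 := by rw [mul_sub, mul_one, hp, sub_self]
  clear_value d
  have hr : (l • (1 - p) - d) * (l⁻¹ • (1 - p) - p * u) = 1 := by
    rw [mul_sub, sub_mul, sub_mul, smul_mul_smul_comm, k3, mul_smul_comm, k2, ← mul_assoc,
      smul_mul_assoc, k4, ← mul_assoc, g2, ← hu, mul_inv_cancel₀ hl0]
    simp
  have hle : (l⁻¹ • (1 - p) - v * p) * (l • (1 - p) - d) = 1 := by
    rw [mul_sub, sub_mul, sub_mul, smul_mul_smul_comm, k3, smul_mul_assoc, k1, mul_smul_comm,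
      mul_assoc v, mul_assoc v, k5, g1, ← hv, inv_mul_cancel₀ hl0]
    simp
  rw [hd]
  exact isUnit_iff_exists_and_exists.2 ⟨⟨_, hr⟩, ⟨_, hle⟩⟩

/-- finite families of orthogonal nonzero idempotents in `Aa` -/
def Orth {A : Type*} [Ring A] [Algebra ℂ A] (a : A) (S : Finset A) : Prop :=
  (∀ p ∈ S, p * p = p ∧ p ≠ 0 ∧ p ∈ Ideal.span {a}) ∧
    ∀ p ∈ S, ∀ q ∈ S, p ≠ q → p * q = 0

theorem orth_card {A : Type*} [Ring A] [Algebra ℂ A] (a : A) (S : Finset A) (h : Orth a S) :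
    (S.card : ℕ∞) ≤ srank a := by
  classical
  let μ : A → ℂ := fun p => if hp : p ∈ S then ((S.equivFin ⟨p, hp⟩ : ℕ) : ℂ) + 1 else 0
  have hμ : ∀ p ∈ S, μ p ≠ 0 := by
    intro p hp
    simp only [μ, hp, dif_pos]
    exact Nat.cast_add_one_ne_zero _
  have hinj : Set.InjOn μ S := by
    intro p hp q hq hpq
    have hp : p ∈ S := hp
    have hq : q ∈ S := hq
    simp only [μ, hp, hq, dif_pos, add_left_inj, Nat.cast_inj] at hpq
    have := S.equivFin.injective (Fin.ext hpq)
    exact congrArg Subtype.val this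
  have hmem : (∑ p ∈ S, μ p • p) ∈ Ideal.span {a} := by
    refine Ideal.sum_mem _ fun p hp => ?_
    rw [← smul_one_mul]
    exact Ideal.mul_mem_left _ _ (h.1 p hp).2.2
  obtain ⟨y, hy⟩ := Ideal.mem_span_singleton'.1 hmem
  have hsub : μ '' S ⊆ nzSpec (y * a) := by
    rintro _ ⟨p, hp, rfl⟩
    have hp : p ∈ S := hp
    refine ⟨?_, hμ p hp⟩
    rw [spectrum.mem_iff, hy]
    intro hu
    apply (h.1 p hp).2.1
    refine hu.mul_right_eq_zero.1 ?_
    rw [sub_mul, Finset.sum_mul, Finset.sum_eq_single_of_mem p hp, smul_mul_assoc, (h.1 p hp).1,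
      Algebra.algebraMap_eq_smul_one, smul_one_mul, sub_self]
    intro q hq hqp
    rw [smul_mul_assoc, h.2 q hq p hp hqp, smul_zero]
  calc (S.card : ℕ∞) = (S : Set A).encard := (Set.encard_coe_eq_coe_finsetCard S).symm
    _ = (μ '' S).encard := (hinj.encard_image).symm
    _ ≤ (nzSpec (y * a)).encard := Set.encard_le_encard hsub
    _ ≤ srank a := le_iSup (fun x => (nzSpec (x * a)).encard) y

theorem socle_decomp {A : Type*} [NormedRing A] [NormedAlgebra ℂ A] [CompleteSpace A]
    [Nontrivial A] (hss : JacobsonSemisimple A) {a : A} (ha : a ∈ socle A) :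
    ∃ S : Finset A, (∀ p ∈ S, MinIdem p) ∧ a = ∑ p ∈ S, a * p := by
  classical
  obtain ⟨N, hN⟩ := ENat.ne_top_iff_exists.1 ha
  have hb : ∀ S : Finset A, Orth a S → S.card ≤ N := by
    intro S hS
    have := orth_card a S hS
    rw [← hN] at this
    exact_mod_cast this
  obtain ⟨S, hS, hmax⟩ : ∃ S : Finset A, Orth a S ∧ ∀ T, Orth a T → T.card ≤ S.card := by
    have hP : ∃ n, ∃ S : Finset A, Orth a S ∧ S.card = n := ⟨0, ∅, by simp [Orth], rfl⟩
    have h1 := Nat.findGreatest_spec (P := fun n => ∃ S : Finset A, Orth a S ∧ S.card = n)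
      (Nat.zero_le N) ⟨∅, by simp [Orth], rfl⟩
    obtain ⟨S, hS, hc⟩ := h1
    refine ⟨S, hS, fun T hT => ?_⟩
    rw [hc]
    exact Nat.le_findGreatest (hb T hT) ⟨T, hT, rfl⟩
  refine ⟨S, ?_, ?_⟩
  · intro p hp
    obtain ⟨hpp, hp0, hpa⟩ := hS.1 p hp
    refine min_of_no_sub hss ha p hpp hp0 hpa ?_
    intro q hq h1 h2 hq0
    by_contra hne
    have hS1 : ∀ r ∈ S.erase p, r * p = 0 ∧ p * r = 0 := fun r hr =>
      ⟨hS.2 r (Finset.mem_of_mem_erase hr) p hp (Finset.ne_of_mem_erase hr),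
       hS.2 p hp r (Finset.mem_of_mem_erase hr) (Finset.ne_of_mem_erase hr).symm⟩
    have hS2 : ∀ r ∈ S.erase p, r * q = 0 ∧ q * r = 0 := fun r hr =>
      ⟨by rw [← h1, ← mul_assoc, (hS1 r hr).1, zero_mul],
       by rw [← h2, mul_assoc, (hS1 r hr).2, mul_zero]⟩
    have hd0 : p - q ≠ 0 := sub_ne_zero.2 (Ne.symm hne)
    have hdd : (p - q) * (p - q) = p - q := by
      rw [mul_sub, sub_mul, sub_mul, hpp, h1, h2, hq]; abel
    have hS3 : ∀ r ∈ S.erase p, r * (p - q) = 0 ∧ (p - q) * r = 0 := fun r hr =>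
      ⟨by rw [mul_sub, (hS1 r hr).1, (hS2 r hr).1, sub_zero],
       by rw [sub_mul, (hS1 r hr).2, (hS2 r hr).2, sub_zero]⟩
    have hqd : q * (p - q) = 0 := by rw [mul_sub, h2, hq, sub_self]
    have hdq : (p - q) * q = 0 := by rw [sub_mul, h1, hq, sub_self]
    have hqa : q ∈ Ideal.span {a} := by rw [← h2]; exact Ideal.mul_mem_left _ _ hpa
    have hO : Orth a (insert q (insert (p - q) (S.erase p))) := by
      constructor
      · intro r hr
        rw [Finset.mem_insert, Finset.mem_insert] at hr
        rcases hr with rfl | rfl | hr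
        · exact ⟨hq, hq0, hqa⟩
        · exact ⟨hdd, hd0, Ideal.sub_mem _ hpa hqa⟩
        · exact hS.1 r (Finset.mem_of_mem_erase hr)
      · intro r hr t ht hrt
        rw [Finset.mem_insert, Finset.mem_insert] at hr ht
        rcases hr with rfl | rfl | hr <;> rcases ht with rfl | rfl | ht
        · exact absurd rfl hrt
        · exact hqd
        · exact (hS2 t ht).2
        · exact hdq
        · exact absurd rfl hrt
        · exact (hS3 t ht).2
        · exact (hS2 r hr).1
        · exact (hS3 r hr).1
        · exact hS.2 r (Finset.mem_of_mem_erase hr) t (Finset.mem_of_mem_erase ht) hrt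
    have hcard := hmax _ hO
    have n1 : p - q ∉ S.erase p := fun h => hd0 (by rw [← hdd]; exact (hS3 _ h).1)
    have n2 : q ∉ insert (p - q) (S.erase p) := by
      rw [Finset.mem_insert]
      rintro (h | h)
      · exact hq0 (by rw [← hq]; nth_rewrite 2 [h]; exact hqd)
      · exact hq0 (by rw [← hq]; exact (hS2 _ h).1)
    rw [Finset.card_insert_of_notMem n2, Finset.card_insert_of_notMem n1,
      Finset.card_erase_of_mem hp] at hcard
    have := Finset.card_pos.2 ⟨p, hp⟩
    omega
  · set P := ∑ p ∈ S, p with hP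
    have hPr : ∀ r ∈ S, P * r = r ∧ r * P = r := by
      intro r hr
      constructor
      · rw [hP, Finset.sum_mul, Finset.sum_eq_single_of_mem r hr, (hS.1 r hr).1]
        intro t ht htr
        exact hS.2 t ht r hr htr
      · rw [hP, Finset.mul_sum, Finset.sum_eq_single_of_mem r hr, (hS.1 r hr).1]
        intro t ht htr
        exact hS.2 r hr t ht htr.symm
    have hPP : P * P = P := by
      nth_rewrite 2 [hP]
      rw [Finset.mul_sum]
      exact Finset.sum_congr rfl fun r hr => (hPr r hr).1
    have hPa : P ∈ Ideal.span {a} := Ideal.sum_mem _ fun p hp => (hS.1 p hp).2.2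
    rw [← Finset.mul_sum, ← hP, ← sub_eq_zero]
    apply ss_zero hss
    intro y
    by_contra hne
    have k3 : (1 - P) * (1 - P) = 1 - P := by
      rw [mul_sub, mul_one, sub_mul, one_mul, hPP, sub_self, sub_zero]
    have hrew : y * (a - a * P) = (y * a * (1 - P)) * (1 - P) := by
      rw [mul_assoc, k3, mul_sub, mul_sub, mul_one, mul_assoc]
    rw [hrew, nz_comm] at hne
    set w := (1 - P) * (y * a * (1 - P)) with hw
    have hwa : w ∈ Ideal.span {a} := by
      have : w = ((1 - P) * y) * a - ((1 - P) * y * a) * P := by rw [hw]; noncomm_ring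
      rw [this]
      exact Ideal.sub_mem _ (Ideal.mul_mem_left _ _ (Ideal.mem_span_singleton_self a))
        (Ideal.mul_mem_left _ _ hPa)
    obtain ⟨q, u, v, hq, hq0, hqu, hqv⟩ :=
      aux_riesz w (nz_fin ha hwa) (Set.nonempty_iff_ne_empty.2 hne)
    have hrq : ∀ r ∈ S, r * q = 0 ∧ q * r = 0 := by
      intro r hr
      constructor
      · have : r * (1 - P) = 0 := by rw [mul_sub, mul_one, (hPr r hr).2, sub_self]
        rw [hqu, hw, ← mul_assoc, ← mul_assoc, this, zero_mul, zero_mul]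
      · have : (1 - P) * r = 0 := by rw [sub_mul, one_mul, (hPr r hr).1, sub_self]
        rw [hqv, hw, mul_assoc, mul_assoc, mul_assoc, this, mul_zero, mul_zero, mul_zero]
    have hqa : q ∈ Ideal.span {a} := by rw [hqv]; exact Ideal.mul_mem_left _ _ hwa
    have hqS : q ∉ S := fun h => hq0 (by rw [← hq]; exact (hrq q h).1)
    have hO : Orth a (insert q S) := by
      constructor
      · intro r hr
        rcases Finset.mem_insert.1 hr with rfl | hr
        · exact ⟨hq, hq0, hqa⟩
        · exact hS.1 r hr
      · intro r hr t ht hrt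
        rw [Finset.mem_insert] at hr ht
        rcases hr with rfl | hr <;> rcases ht with rfl | ht
        · exact absurd rfl hrt
        · exact (hrq t ht).2
        · exact (hrq r hr).1
        · exact hS.2 r hr t ht hrt
    have hcard := hmax _ hO
    rw [Finset.card_insert_of_notMem hqS] at hcard
    omega

theorem rank_one_of_min {A : Type*} [Ring A] [Algebra ℂ A] (hss : JacobsonSemisimple A)
    {m : A} (hm : MinIdem m) (u v : A) (h0 : u * m * v ≠ 0) : srank (u * m * v) = 1 := by
  obtain ⟨hmm, hm0, hmk⟩ := hm
  apply le_antisymm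
  · refine iSup_le fun y => ?_
    have : y * (u * m * v) = (y * u * m) * (m * v) := by
      rw [← mul_assoc (y * u * m), mul_assoc (y * u), hmm]; simp only [mul_assoc]
    rw [this, nz_comm]
    obtain ⟨k, hk⟩ := hmk (v * y * u)
    have h2 : m * v * (y * u * m) = k • m := by rw [← hk]; simp only [mul_assoc]
    rw [h2, nz_smul_idem m hmm hm0]
    exact (Set.encard_le_encard Set.sdiff_subset).trans (Set.encard_singleton k).le
  · by_contra hlt
    apply h0
    apply ss_zero hss
    intro y
    have h1 : (nzSpec (y * (u * m * v))).encard ≤ srank (u * m * v) :=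
      le_iSup (fun x => (nzSpec (x * (u * m * v))).encard) y
    rw [← Set.encard_eq_zero]
    exact Order.lt_one_iff.1 (lt_of_le_of_lt h1 (not_le.1 hlt))


theorem socle_eq_iff_spectrum_mul_rank_one
    {A : Type*} [NormedRing A] [NormOneClass A] [NormedAlgebra ℂ A] [CompleteSpace A]
    (hss : JacobsonSemisimple A) (a b : A) (ha : a ∈ socle A) (hb : b ∈ socle A) :
    a = b ↔ ∀ x : A, srank x = 1 → spectrum ℂ (a * x) = spectrum ℂ (b * x) := by
  constructor
  · rintro rfl x _; rfl
  intro h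
  have : Nontrivial A := NormOneClass.nontrivial
  have key : ∀ m : A, MinIdem m → ∀ u : A, (a - b) * u * m = 0 := by
    intro m hm u
    have hvv : ∀ v, m * (v * (a - b) * u) * m = 0 := by
      intro v
      have hnz : nzSpec (a * (u * m * v)) = nzSpec (b * (u * m * v)) := by
        by_cases h0 : u * m * v = 0
        · rw [h0, mul_zero, mul_zero]
        · unfold nzSpec
          rw [h _ (rank_one_of_min hss hm u v h0)]
      obtain ⟨hmm, hm0, hmk⟩ := hm
      obtain ⟨k, hk⟩ := hmk (v * a * u)
      obtain ⟨l, hl⟩ := hmk (v * b * u)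
      have hre : ∀ c k, m * (v * c * u) * m = k • m →
          nzSpec (c * (u * m * v)) = ({k} : Set ℂ) \ {0} := by
        intro c k hk
        have : c * (u * m * v) = (c * u * m) * (m * v) := by
          rw [← mul_assoc (c * u * m), mul_assoc (c * u), hmm]; simp only [mul_assoc]
        rw [this, nz_comm, ← nz_smul_idem m hmm hm0 k, ← hk]
        simp only [mul_assoc]
      rw [hre a k hk, hre b l hl] at hnz
      have hkl : k = l := by
        by_cases hk0 : k = 0
        · by_contra hne
          have : l ∈ ({l} : Set ℂ) \ {0} := ⟨rfl, fun h => hne (by rw [hk0, Set.mem_singleton_iff.1 h])⟩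
          rw [← hnz] at this
          exact hne this.1.symm
        · have : k ∈ ({k} : Set ℂ) \ {0} := ⟨rfl, hk0⟩
          rw [hnz] at this
          exact this.1
      have : m * (v * (a - b) * u) * m = m * (v * a * u) * m - m * (v * b * u) * m := by
        noncomm_ring
      rw [this, hk, hl, hkl, sub_self]
    apply ss_zero hss
    intro v
    have : v * ((a - b) * u * m) = (v * (a - b) * u * m) * m := by
      rw [mul_assoc _ m m, hm.1]; simp only [mul_assoc]
    rw [this, nz_comm]
    have h2 := hvv v
    rw [mul_assoc] at h2
    rw [h2, nz_zero]
  obtain ⟨S, hS, haS⟩ := socle_decomp hss ha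
  obtain ⟨T, hT, hbT⟩ := socle_decomp hss hb
  have hcc : ∀ y, (a - b) * y * (a - b) = 0 := by
    intro y
    have h1 : (a - b) * y * a = 0 := by
      have h0 : (a - b) * y * a = (a - b) * y * ∑ p ∈ S, a * p := congrArg _ haS
      rw [h0, Finset.mul_sum]
      refine Finset.sum_eq_zero fun p hp => ?_
      rw [← mul_assoc, mul_assoc (a - b)]
      exact key p (hS p hp) _
    have h2 : (a - b) * y * b = 0 := by
      have h0 : (a - b) * y * b = (a - b) * y * ∑ p ∈ T, b * p := congrArg _ hbT
      rw [h0, Finset.mul_sum]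
      refine Finset.sum_eq_zero fun p hp => ?_
      rw [← mul_assoc, mul_assoc (a - b)]
      exact key p (hT p hp) _
    rw [mul_sub, h1, h2, sub_zero]
  rw [← sub_eq_zero]
  apply ss_zero hss
  intro y
  rw [Set.eq_empty_iff_forall_notMem]
  rintro z ⟨hz, hz0⟩
  have h2 := spectrum.pow_mem_pow (y * (a - b)) 2 hz
  have h3 : (y * (a - b)) ^ 2 = 0 := by
    rw [pow_two, mul_assoc, ← mul_assoc (a - b), hcc, mul_zero]
  rw [h3, spectrum.zero_eq] at h2
  exact hz0 (pow_eq_zero_iff (by norm_num) |>.1 h2)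
end
end

section
/- Let A be a complex semisimple unital Banach algebra and let a, b ∈ Soc A. Then a = b if and only if σ(a + x) = σ(b + x) for every rank one element x ∈ A. -/
open Complex

noncomputable section

section helpers

set_option linter.unusedSectionVars false

open Filter Topology

variable {A : Type*} [NormedRing A] [NormOneClass A] [NormedAlgebra ℂ A] [CompleteSpace A]

lemma qn_pow_le (x : A) (hx : nzSpec x = ∅) (ε : ℝ) (hε : 0 < ε) :
    ∀ᶠ n : ℕ in atTop, ‖x ^ n‖ ≤ ε ^ n := by
  have hr : spectralRadius ℂ x = 0 := by
    unfold spectralRadius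
    simp only [ENNReal.iSup_eq_zero]
    intro k hk
    by_cases h0 : k = 0
    · simp [h0]
    · have : k ∈ nzSpec x := ⟨hk, h0⟩
      rw [hx] at this
      exact this.elim
  have h := spectrum.pow_norm_pow_one_div_tendsto_nhds_spectralRadius x
  rw [hr] at h
  have h2 : ∀ᶠ n : ℕ in atTop, ENNReal.ofReal (‖x ^ n‖ ^ (1 / n : ℝ)) < ENNReal.ofReal ε :=
    h.eventually_lt_const (by simpa using hε)
  filter_upwards [h2, eventually_ge_atTop 1] with n hn hn1
  have h3 := (ENNReal.ofReal_lt_ofReal_iff hε).1 hn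
  have h4 : (‖x ^ n‖ ^ (1 / n : ℝ)) ^ n ≤ ε ^ n := by
    gcongr
  have h5 : (‖x ^ n‖ ^ (1 / n : ℝ)) ^ n = ‖x ^ n‖ := by
    rw [one_div]
    exact Real.rpow_inv_natCast_pow (norm_nonneg _) (by omega)
  rwa [h5] at h4

lemma catalan_le_four_pow (n : ℕ) : catalan n ≤ 4 ^ n := by
  rw [catalan_eq_centralBinom_div]
  refine (Nat.div_le_self _ _).trans ?_
  rw [Nat.centralBinom_eq_two_mul_choose]
  calc (2 * n).choose n ≤ 2 ^ (2 * n) := Nat.choose_le_two_pow _ _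
    _ = 4 ^ n := by rw [pow_mul]; norm_num

lemma exists_catalan (x : A) (hx : nzSpec x = ∅) :
    ∃ C : A, C = 1 + x * (C * C) ∧ ∀ y, Commute y x → Commute y C := by
  set F : ℕ → A := fun n => (catalan n : A) * x ^ n with hF
  have hs : Summable (fun n => ‖F n‖) := by
    have hg : Summable (fun n : ℕ => ((1 / 2 : ℝ)) ^ n) :=
      summable_geometric_of_lt_one (by norm_num) (by norm_num)
    refine Summable.of_norm_bounded_eventually_nat hg ?_
    filter_upwards [qn_pow_le x hx (1 / 8) (by norm_num)] with n hn
    rw [norm_norm, hF]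
    simp only
    rw [← nsmul_eq_mul]
    calc ‖catalan n • x ^ n‖ ≤ catalan n * ‖x ^ n‖ := norm_nsmul_le
      _ ≤ (4 : ℝ) ^ n * (1 / 8) ^ n := by
        gcongr
        exact_mod_cast catalan_le_four_pow n
      _ = (1 / 2) ^ n := by rw [← mul_pow]; norm_num
  have hsF : Summable F := hs.of_norm
  refine ⟨∑' n, F n, ?_, ?_⟩
  · rw [tsum_mul_tsum_eq_tsum_sum_antidiagonal_of_summable_norm hs hs, hsF.tsum_eq_zero_add]
    congr 1
    · simp [hF]
    · have hsum : Summable fun n => ∑ kl ∈ Finset.HasAntidiagonal.antidiagonal n, F kl.1 * F kl.2 :=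
        (summable_norm_sum_mul_antidiagonal_of_summable_norm hs hs).of_norm
      rw [← hsum.tsum_mul_left]
      congr 1
      funext n
      simp only [hF]
      rw [catalan_succ', Finset.mul_sum]
      push_cast
      rw [Finset.sum_mul]
      refine Finset.sum_congr rfl fun kl hkl => ?_
      rw [Finset.HasAntidiagonal.mem_antidiagonal] at hkl
      rw [← hkl, pow_succ', pow_add]
      have h1 : Commute ((catalan kl.1 : A)) x := Nat.cast_commute _ _
      have h2 : Commute ((catalan kl.2 : A)) (x ^ kl.1) := Nat.cast_commute _ _
      have h3 : Commute ((catalan kl.2 : A)) x := Nat.cast_commute _ _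
      calc (catalan kl.1 : A) * catalan kl.2 * (x * (x ^ kl.1 * x ^ kl.2))
          = catalan kl.1 * (catalan kl.2 * x) * (x ^ kl.1 * x ^ kl.2) := by noncomm_ring
        _ = (catalan kl.1 * x) * (catalan kl.2 * x ^ kl.1) * x ^ kl.2 := by
            rw [h3.eq]; noncomm_ring
        _ = x * (catalan kl.1 * x ^ kl.1 * (catalan kl.2 * x ^ kl.2)) := by
            rw [h1.eq, h2.eq]; noncomm_ring
  · intro y hy
    refine Commute.tsum_right _ fun n => ?_
    exact (Nat.commute_cast _ _).mul_right (hy.pow_right n)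

lemma isUnit_of_not_nz {x : A} (hx : nzSpec x = ∅) {k : ℂ} (hk : k ≠ 0) :
    IsUnit (algebraMap ℂ A k - x) := by
  by_contra h
  have : k ∈ nzSpec x := ⟨h, hk⟩
  rw [hx] at this
  exact this

lemma riesz (q : A) (hfin : (nzSpec q).Finite) (hne : nzSpec q ≠ ∅) :
    ∃ f g : A, f * f = f ∧ f ≠ 0 ∧ f = g * q ∧ f = q * g := by
  classical
  have : Nontrivial A := NormOneClass.nontrivial
  obtain ⟨k, hk⟩ := Set.nonempty_iff_ne_empty.2 hne
  -- the interpolating polynomial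
  set S := insert 0 hfin.toFinset with hS
  set P : Polynomial ℂ := Lagrange.interpolate S id (fun z => if z = 0 then 0 else 1) with hP
  have hPe : ∀ z ∈ S, P.eval z = if z = 0 then 0 else 1 := fun z hz => by
    have := Lagrange.eval_interpolate_at_node (s := S) (v := id)
      (fun z : ℂ => if z = 0 then (0 : ℂ) else 1) (Function.injective_id.injOn) hz
    exact this
  have hP0 : P.eval 0 = 0 := by
    rw [hPe 0 (by simp [hS])]; simp
  obtain ⟨R, hR⟩ : Polynomial.X ∣ P := by
    rw [Polynomial.X_dvd_iff, Polynomial.coeff_zero_eq_eval_zero, hP0]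
  set p := Polynomial.aeval q P with hp
  set r := Polynomial.aeval q R with hr
  have hpr : p = q * r := by rw [hp, hR]; simp [hr]
  have hqr : Commute q r := by
    have := (Commute.all Polynomial.X R).map (Polynomial.aeval q)
    simpa using this
  have hsS : ∀ z ∈ spectrum ℂ q, z ∈ S := fun z hz => by
    by_cases h : z = 0
    · simp [hS, h]
    · simp [hS, h]; exact ⟨hz, h⟩
  have hx : nzSpec (p - p * p) = ∅ := by
    have h1 : p - p * p = Polynomial.aeval q (P - P * P) := by simp [hp]
    rw [nzSpec, h1, spectrum.map_polynomial_aeval]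
    ext z
    simp only [Set.mem_sdiff, Set.mem_image, Set.mem_singleton_iff, Set.mem_empty_iff_false,
      iff_false, not_and, not_not]
    rintro ⟨w, hw, rfl⟩
    simp only [Polynomial.eval_sub, Polynomial.eval_mul, hPe w (hsS w hw)]
    split_ifs <;> simp
  have h1p : ¬ IsUnit (1 - p) := by
    have : (1 : ℂ) ∈ spectrum ℂ p := by
      rw [hp, spectrum.map_polynomial_aeval]
      refine ⟨k, hk.1, ?_⟩
      have hk0 : k ≠ 0 := hk.2
      simp [hPe k (hsS k hk.1), hk0]
    rw [spectrum.mem_iff] at this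
    simpa using this
  obtain ⟨C, hC, hCc⟩ := exists_catalan _ hx
  have hqp : Commute q p := by rw [hpr]; exact (Commute.refl q).mul_right hqr
  have hqx : Commute q (p - p * p) := hqp.sub_right (hqp.mul_right hqp)
  have hpx : Commute p (p - p * p) :=
    (Commute.refl p).sub_right ((Commute.refl p).mul_right (Commute.refl p))
  have hpC := hCc p hpx
  have hqC := hCc q hqx
  set x := p - p * p with hxd
  have hxC : Commute x C := hCc x (Commute.refl x)
  set g := x * C with hg
  have hpg : Commute p g := hpx.mul_right hpC
  have hqg : Commute q g := hqx.mul_right hqC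
  have hgg : g * g = g - x := by
    have : g = x + g * g := by
      calc g = x * C := hg
        _ = x * (1 + x * (C * C)) := by rw [← hC]
        _ = x + x * (x * C) * C := by noncomm_ring
        _ = x + x * (C * x) * C := by rw [hxC.eq]
        _ = x + g * g := by rw [hg]; noncomm_ring
    rw [eq_sub_iff_add_eq, add_comm]; exact this.symm
  have hu : IsUnit (1 - 2 * g) := by
    have h2 : (1 - 2 * g) ^ 2 = 1 - 4 * x := by
      have : (1 - 2 * g) ^ 2 = 1 - 4 * g + 4 * (g * g) := by noncomm_ring
      rw [this, hgg]; noncomm_ring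
    have h3 : IsUnit (1 - 4 * x) := by
      have h4 := isUnit_of_not_nz hx (k := 1 / 4) (by norm_num)
      have h5 : (1 - 4 * x) = algebraMap ℂ A 4 * (algebraMap ℂ A (1 / 4) - x) := by
        have h6 : algebraMap ℂ A 4 = 4 := map_ofNat _ 4
        have h7 : algebraMap ℂ A 4 * algebraMap ℂ A (1 / 4) = 1 := by
          rw [← map_mul, mul_one_div_cancel (by norm_num), map_one]
        rw [mul_sub (algebraMap ℂ A 4), h7, h6]
      rw [h5]
      exact (IsUnit.map (algebraMap ℂ A) (by norm_num)).mul h4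
    rw [← h2] at h3
    exact (isUnit_pow_iff (by norm_num)).1 h3
  obtain ⟨u, hu⟩ := hu
  have hcomm : ∀ y, Commute y g → Commute y (↑u⁻¹ : A) := fun y hy => by
    apply Commute.units_inv_right
    rw [hu]
    exact (Commute.one_right y).sub_right
      (Commute.mul_right (Nat.commute_cast y 2) hy)
  have hpv := hcomm p hpg
  have hqv := hcomm q hqg
  have hgv := hcomm g (Commute.refl g)
  set v : A := ↑u⁻¹ with hv
  have huv : (1 - 2 * g) * v = 1 := by rw [← hu]; simp [hv]
  have hkey : (p - g) * (p - g) = (p - g) * (1 - 2 * g) := by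
    have e1 : (p - g) * (p - g) = p * p - p * g - g * p + g * g := by noncomm_ring
    have e2 : (p - g) * (1 - 2 * g) = p - g - 2 * (p * g) + 2 * (g * g) := by noncomm_ring
    rw [e1, e2, ← hpg.eq, hgg, hxd]; noncomm_ring
  have hfact : p - g = q * (r * (1 - (1 - p) * C)) := by
    rw [hg, hxd]
    have : q * (r * (1 - (1 - p) * C)) = (q * r) * (1 - (1 - p) * C) := by noncomm_ring
    rw [this, ← hpr]; noncomm_ring
  have hrest : Commute q (r * (1 - (1 - p) * C) * v) := by
    refine Commute.mul_right (hqr.mul_right ?_) hqv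
    exact (Commute.one_right q).sub_right (((Commute.one_right q).sub_right hqp).mul_right hqC)
  have hf2 : (p - g) * v = q * (r * (1 - (1 - p) * C) * v) := by
    rw [hfact]; noncomm_ring
  refine ⟨(p - g) * v, r * (1 - (1 - p) * C) * v, ?_, ?_, ?_, hf2⟩
  · have hc : Commute (p - g) v := hpv.sub_left hgv
    calc (p - g) * v * ((p - g) * v) = (p - g) * (v * (p - g)) * v := by noncomm_ring
      _ = (p - g) * (p - g) * v * v := by rw [← hc.eq]; noncomm_ring
      _ = (p - g) * ((1 - 2 * g) * v) * v := by rw [hkey]; noncomm_ring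
      _ = (p - g) * v := by rw [huv, mul_one]
  · intro h0
    have hpg0 : p - g = 0 := by
      have : (p - g) * v * u = 0 := by rw [h0, zero_mul]
      simpa [hv, mul_assoc] using this
    have hpg1 : p = g := sub_eq_zero.1 hpg0
    apply h1p
    have hgC : Commute g C := by rw [hg]; exact hxC.mul_left (Commute.refl C)
    have e1 : (1 - g) * C = 1 := by
      have : (1 - g) * C = C - x * (C * C) := by rw [hg]; noncomm_ring
      rw [this]; nth_rewrite 1 [hC]; abel
    have e2 : C * (1 - g) = 1 := by
      rw [← ((Commute.one_left C).sub_left hgC).eq, e1]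
    rw [hpg1]
    exact ⟨⟨1 - g, C, e1, e2⟩, rfl⟩
  · rw [hf2, hrest.eq]

lemma eq_zero_of_qn (hss : JacobsonSemisimple A) (x : A) (h : ∀ y, nzSpec (y * x) = ∅) :
    x = 0 := by
  have hx : x ∈ TwoSidedIdeal.jacobson (⊥ : TwoSidedIdeal A) := by
    rw [TwoSidedIdeal.mem_jacobson_iff]
    intro y
    have hu := isUnit_of_not_nz (h (-y)) (k := 1) one_ne_zero
    obtain ⟨u, hu⟩ := hu
    refine ⟨↑u⁻¹, ?_⟩
    have h1 : (↑u⁻¹ : A) * (algebraMap ℂ A 1 - -y * x) = 1 := by rw [← hu]; simp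
    have h2 : (↑u⁻¹ : A) * y * x + ↑u⁻¹ - 1 = 0 := by
      rw [sub_eq_zero, ← h1, map_one]; noncomm_ring
    rw [h2]
    exact zero_mem _
  rw [hss] at hx
  simpa using hx

lemma nzSpec_comm (x y : A) : nzSpec (x * y) = nzSpec (y * x) :=
  spectrum.nonzero_mul_comm x y

lemma nzSpec_of_cube {x : A} (h : x * x * x = 0) : nzSpec x = ∅ := by
  rw [Set.eq_empty_iff_forall_notMem]
  rintro k ⟨hk, hk0⟩
  have hk0 : k ≠ 0 := hk0
  have h3 := spectrum.pow_mem_pow x 3 hk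
  have h4 : x ^ 3 = 0 := by rw [← h]; noncomm_ring
  rw [h4] at h3
  have h5 := spectrum.norm_le_norm_of_mem h3
  rw [norm_zero, norm_le_zero_iff] at h5
  exact hk0 (pow_eq_zero_iff (by norm_num) |>.1 h5)

lemma srank_mul_le (y x : A) : srank (y * x) ≤ srank x := by
  unfold srank
  refine iSup_le fun z => ?_
  rw [← mul_assoc]
  exact le_iSup (fun z => (nzSpec (z * x)).encard) (z * y)

lemma finite_of_srank {x : A} (h : srank x ≠ ⊤) (y : A) : (nzSpec (y * x)).Finite := by
  rw [← Set.encard_lt_top_iff]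
  exact lt_of_le_of_lt (le_iSup (fun z => (nzSpec (z * x)).encard) y) (lt_top_iff_ne_top.2 h)

/-- Strict monotonicity of the rank on idempotents. -/
lemma srank_add_one_le {e f : A} (hf : f * f = f) (hef : e * f = f)
    (hfe : f * e = f) (hee : e * e = e) (hne : f ≠ e) (hfin : srank f ≠ ⊤) :
    srank f + 1 ≤ srank e := by
  obtain ⟨y, hy⟩ := ENat.exists_eq_iSup_of_lt_top
    (f := fun z => (nzSpec (z * f)).encard) (lt_top_iff_ne_top.2 hfin)
  have hy' : (nzSpec (y * f)).encard = srank f := hy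
  rw [← hy']
  have hset : nzSpec (y * f) = nzSpec (f * y * f) := by
    rw [nzSpec_comm (f * y) f, ← mul_assoc, hf, nzSpec_comm]
  have hfinite : (nzSpec (f * y * f)).Finite := finite_of_srank hfin _
  obtain ⟨μ, hμ⟩ := (hfinite.insert 0).exists_notMem
  have hμ0 : μ ≠ 0 := fun h => hμ (by simp [h])
  have hμ1 : μ ∉ nzSpec (f * y * f) := fun h => hμ (Set.mem_insert_of_mem _ h)
  set g := e - f with hg
  have hg0 : g ≠ 0 := fun h => hne (sub_eq_zero.1 h).symm
  have hfg : f * g = 0 := by rw [hg, mul_sub, hfe, hf, sub_self]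
  have hgf : g * f = 0 := by rw [hg, sub_mul, hef, hf, sub_self]
  have hgg : g * g = g := by
    rw [hg, mul_sub, sub_mul, sub_mul, hee, hfe, hef, hf]; simp
  have hge : g * e = g := by rw [hg, sub_mul, hee, hfe]
  set M := algebraMap ℂ A μ with hM
  have hMc : ∀ z, M * z = z * M := fun z => Algebra.commutes μ z
  set T := f * y * f + M * g with hT
  have hTe : (f * y * f + M * g) * e = T := by
    have : (f * y * f + M * g) * e = f * y * (f * e) + M * (g * e) := by noncomm_ring
    rw [this, hfe, hge]
  have hsub : insert μ (nzSpec (f * y * f)) ⊆ nzSpec T := by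
    rw [Set.insert_subset_iff]
    constructor
    · refine ⟨?_, hμ0⟩
      intro hu
      have hu' : IsUnit (M - T) := hu
      have : (M - T) * g = 0 := by
        have : (M - T) * g = M * g - f * y * (f * g) - M * (g * g) := by
          rw [hT]; noncomm_ring
        rw [this, hfg, hgg]; simp
      exact hg0 ((hu'.mul_right_eq_zero).1 this)
    · rintro k ⟨hk, hk0⟩
      have hk0 : k ≠ 0 := hk0
      refine ⟨?_, hk0⟩
      intro hu
      apply hk
      have hu' : IsUnit (algebraMap ℂ A k - T) := hu
      show IsUnit (algebraMap ℂ A k - f * y * f)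
      set K := algebraMap ℂ A k with hK
      have hKc : ∀ z, K * z = z * K := fun z => Algebra.commutes k z
      set L := algebraMap ℂ A k⁻¹ with hL
      have hLc : ∀ z, L * z = z * L := fun z => Algebra.commutes k⁻¹ z
      have hKL : K * L = 1 := by rw [hK, hL, ← map_mul, mul_inv_cancel₀ hk0, map_one]
      have hLK : L * K = 1 := by rw [hLc, hKL]
      obtain ⟨u, hu⟩ := hu'
      set v : A := ↑u⁻¹ with hv
      have huv : (K - T) * v = 1 := by rw [← hu]; simp [hv]
      have hvu : v * (K - T) = 1 := by rw [← hu]; simp [hv]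
      have hfT : f * T = f * y * f := by
        have : f * T = (f * f) * y * f + f * M * g := by rw [hT]; noncomm_ring
        rw [this, hf, ← hMc f, mul_assoc M, hfg]; simp
      have hTf : T * f = f * y * f := by
        have : T * f = f * y * (f * f) + M * (g * f) := by rw [hT]; noncomm_ring
        rw [this, hf, hgf]; simp
      have hcf : Commute f v := by
        apply Commute.units_inv_right
        rw [hu]
        show f * (K - T) = (K - T) * f
        rw [mul_sub, sub_mul, hfT, hTf, hKc]
      have e1 : K - f * y * f = f * (K - T) + K * (1 - f) := by
        rw [mul_sub, hfT, ← hKc]; noncomm_ring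
      have e2 : K - f * y * f = (K - T) * f + K * (1 - f) := by
        rw [sub_mul, hTf]; noncomm_ring
      have hff : f * (1 - f) = 0 := by rw [mul_sub, hf]; simp
      have hff' : (1 - f) * f = 0 := by rw [sub_mul, hf]; simp
      have hff2 : (1 - f) * (1 - f) = 1 - f := by rw [mul_sub, hff']; simp
      refine ⟨⟨K - f * y * f, f * v + L * (1 - f), ?_, ?_⟩, rfl⟩
      · rw [e2]
        calc ((K - T) * f + K * (1 - f)) * (f * v + L * (1 - f))
            = (K - T) * (f * f) * v + (K - T) * (f * L) * (1 - f) + K * ((1 - f) * f) * v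
              + K * ((1 - f) * L) * (1 - f) := by noncomm_ring
          _ = (K - T) * (f * v) + (K - T) * L * (f * (1 - f))
              + K * L * ((1 - f) * (1 - f)) := by
            rw [hf, hff', ← hLc, ← hLc]; noncomm_ring
          _ = (K - T) * v * f + (1 - f) := by
            rw [hff, hff2, hKL, hcf.eq]; noncomm_ring
          _ = 1 := by rw [huv]; noncomm_ring
      · rw [e1]
        calc (f * v + L * (1 - f)) * (f * (K - T) + K * (1 - f))
            = (v * f + L * (1 - f)) * (f * (K - T) + K * (1 - f)) := by rw [hcf.eq]
          _ = v * (f * f) * (K - T) + v * (f * K) * (1 - f) + L * ((1 - f) * f) * (K - T)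
              + L * ((1 - f) * K) * (1 - f) := by noncomm_ring
          _ = (v * f) * (K - T) + v * K * (f * (1 - f))
              + L * K * ((1 - f) * (1 - f)) := by
            rw [hf, hff', ← hKc, ← hKc]; noncomm_ring
          _ = f * (v * (K - T)) + (1 - f) := by
            rw [hff, hff2, hLK, ← hcf.eq]; noncomm_ring
          _ = 1 := by rw [hvu]; noncomm_ring
  rw [hset, ← Set.encard_insert_of_notMem hμ1]
  refine (Set.encard_le_encard hsub).trans ?_
  rw [← hTe]
  exact le_iSup (fun z => (nzSpec (z * e)).encard) _

/-- Existence of minimal idempotents below a nonzero finite rank element. -/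
lemma exists_min_idem (hss : JacobsonSemisimple A) (d : A) (hd : srank d ≠ ⊤) (hd0 : d ≠ 0) :
    ∃ e g : A, e = g * d ∧ e * e = e ∧ e ≠ 0 ∧ ∀ z, ∃ α : ℂ, e * z * e = algebraMap ℂ A α * e := by
  classical
  -- a nonzero element has a non quasinilpotent left multiple
  have key : ∀ x : A, x ≠ 0 → ∃ y, nzSpec (y * x) ≠ ∅ := fun x hx => by
    by_contra! h
    exact hx (eq_zero_of_qn hss x h)
  let S : Set A := {e | e * e = e ∧ e ≠ 0 ∧ ∃ g, e = g * d}
  have hS : S.Nonempty := by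
    obtain ⟨y, hy⟩ := key d hd0
    obtain ⟨f, g, h1, h2, h3, -⟩ := riesz (y * d) (finite_of_srank hd y) hy
    exact ⟨f, h1, h2, g * y, by rw [h3, mul_assoc]⟩
  obtain ⟨e, ⟨he, he0, g0, heg⟩, hmin⟩ :
      ∃ e ∈ S, ∀ f ∈ S, srank e ≤ srank f := by
    obtain ⟨e, he, hm⟩ := WellFounded.has_min (InvImage.wf (srank (A := A)) wellFounded_lt) S hS
    exact ⟨e, he, fun f hf => not_lt.1 (hm f hf)⟩
  have hefin : srank e ≠ ⊤ := by
    rw [heg]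
    exact ne_top_of_le_ne_top hd (srank_mul_le g0 d)
  -- every nonzero idempotent in the corner is `e`
  have hB : ∀ f, f * f = f → f ≠ 0 → e * f = f → f * e = f → f = e := by
    intro f h1 h2 h3 h4
    by_contra hne
    have hf : f ∈ S := ⟨h1, h2, f * g0, by rw [mul_assoc, ← heg, h4]⟩
    have hff : srank f ≠ ⊤ := by
      rw [← h4]
      exact ne_top_of_le_ne_top hefin (srank_mul_le f e)
    have h5 := srank_add_one_le h1 h3 h4 he hne hff
    have h6 := hmin f hf
    exact absurd (h5.trans h6) (not_le.2 (ENat.lt_add_one_iff hff |>.2 le_rfl))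
  -- nonzero elements of the corner are left invertible
  have hinv : ∀ z, e * z = z → z * e = z → z ≠ 0 → ∃ u, e * u = u ∧ u * e = u ∧ u * z = e := by
    intro z h1 h2 h0
    obtain ⟨y, hy⟩ := key z h0
    have hw : nzSpec (e * y * z) ≠ ∅ := by
      have : nzSpec (e * y * z) = nzSpec (y * z) := by
        rw [mul_assoc, nzSpec_comm, mul_assoc, h2]
      rwa [this]
    have hwfin : (nzSpec (e * y * z)).Finite := by
      rw [← h2, ← mul_assoc]
      exact finite_of_srank hefin _
    obtain ⟨f, g, f1, f2, f3, f4⟩ := riesz _ hwfin hw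
    have hf : f = e := by
      apply hB f f1 f2
      · rw [f4, ← mul_assoc, ← mul_assoc, ← mul_assoc, he]
      · rw [f3, mul_assoc, mul_assoc, h2]
    refine ⟨e * (g * (e * y)) * e, ?_, ?_, ?_⟩
    · rw [← mul_assoc, ← mul_assoc, he]
    · rw [mul_assoc, he]
    · rw [mul_assoc, h1]
      have : e * (g * (e * y)) * z = e * (g * (e * y * z)) := by noncomm_ring
      rw [this, ← f3, hf, he]
  -- quasinilpotents in the corner vanish
  have hqn : ∀ z, e * z = z → z * e = z → nzSpec z = ∅ → z = 0 := by
    intro z h1 h2 hq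
    by_contra h0
    obtain ⟨u, u1, u2, u3⟩ := hinv z h1 h2 h0
    have hpow : ∀ n : ℕ, u ^ (n + 1) * z ^ (n + 1) = e := by
      intro n
      induction n with
      | zero => simpa using u3
      | succ n ih =>
        rw [pow_succ u, pow_succ' z]
        have : u ^ (n + 1) * u * (z * z ^ (n + 1)) = u ^ (n + 1) * (u * z) * z ^ (n + 1) := by
          noncomm_ring
        rw [this, u3, mul_assoc, pow_succ' z n, ← mul_assoc e, h1, ← pow_succ', ih]
    have hpos : 0 < ‖e‖ := norm_pos_iff.2 he0
    have hε : 0 < 1 / (2 * (‖u‖ + 1)) := by positivity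
    have ev := qn_pow_le z hq _ hε
    have ev2 : ∀ᶠ n : ℕ in atTop, (1 / 2 : ℝ) ^ n < ‖e‖ :=
      (tendsto_pow_atTop_nhds_zero_of_lt_one (by norm_num) (by norm_num)).eventually_lt_const hpos
    obtain ⟨n, hn1, hn2, hn3⟩ := (ev.and (ev2.and (eventually_ge_atTop 1))).exists
    obtain ⟨m, rfl⟩ : ∃ m, n = m + 1 := ⟨n - 1, by omega⟩
    have : ‖e‖ ≤ (1 / 2) ^ (m + 1) := by
      calc ‖e‖ = ‖u ^ (m + 1) * z ^ (m + 1)‖ := by rw [hpow]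
        _ ≤ ‖u ^ (m + 1)‖ * ‖z ^ (m + 1)‖ := norm_mul_le _ _
        _ ≤ (‖u‖ + 1) ^ (m + 1) * (1 / (2 * (‖u‖ + 1))) ^ (m + 1) := by
          gcongr
          refine (norm_pow_le _ _).trans ?_
          gcongr
          linarith
        _ = (1 / 2) ^ (m + 1) := by
          rw [← mul_pow]; congr 1; field_simp
    linarith
  refine ⟨e, g0, heg, he, he0, fun z' => ?_⟩
  set z := e * z' * e with hz
  have h1 : e * z = z := by rw [hz, ← mul_assoc, ← mul_assoc, he]
  have h2 : z * e = z := by rw [hz, mul_assoc, he]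
  by_cases h0 : z = 0
  · exact ⟨0, by simp [h0]⟩
  have hne : nzSpec z ≠ ∅ := fun h => h0 (hqn z h1 h2 h)
  obtain ⟨k, hk, hk0⟩ := Set.nonempty_iff_ne_empty.2 hne
  have hk0 : k ≠ 0 := hk0
  refine ⟨k, ?_⟩
  by_contra hcon
  set K := algebraMap ℂ A k with hK
  have hKc : ∀ z, K * z = z * K := fun z => Algebra.commutes k z
  set L := algebraMap ℂ A k⁻¹ with hL
  have hLc : ∀ z, L * z = z * L := fun z => Algebra.commutes k⁻¹ z
  have hKL : K * L = 1 := by rw [hK, hL, ← map_mul, mul_inv_cancel₀ hk0, map_one]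
  have hLK : L * K = 1 := by rw [hLc, hKL]
  set w := K * e - z with hw
  have hw0 : w ≠ 0 := fun h => hcon (sub_eq_zero.1 h).symm
  have w1 : e * w = w := by rw [hw, mul_sub, h1, ← mul_assoc, ← hKc, mul_assoc, he]
  have w2 : w * e = w := by rw [hw, sub_mul, h2, mul_assoc, he]
  obtain ⟨u, u1, u2, u3⟩ := hinv w w1 w2 hw0
  have hu0 : u ≠ 0 := fun h => he0 (by rw [← u3, h, zero_mul])
  obtain ⟨t, t1, t2, t3⟩ := hinv u u1 u2 hu0
  have htw : t = w := by
    calc t = t * (u * w) := by rw [u3, t2]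
      _ = w := by rw [← mul_assoc, t3, w1]
  have u4 : w * u = e := by rw [← htw, t3]
  apply hk
  show IsUnit (K - z)
  have e1 : K - z = w + K * (1 - e) := by rw [hw]; noncomm_ring
  have hee : e * (1 - e) = 0 := by rw [mul_sub, he]; simp
  have hee' : (1 - e) * e = 0 := by rw [sub_mul, he]; simp
  have hee2 : (1 - e) * (1 - e) = 1 - e := by rw [mul_sub, hee']; simp
  have we : w * (1 - e) = 0 := by rw [mul_sub, w2]; simp
  have we' : (1 - e) * w = 0 := by rw [sub_mul, w1]; simp
  have ue : u * (1 - e) = 0 := by rw [mul_sub, u2]; simp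
  have ue' : (1 - e) * u = 0 := by rw [sub_mul, u1]; simp
  refine ⟨⟨K - z, u + L * (1 - e), ?_, ?_⟩, rfl⟩
  · rw [e1]
    calc (w + K * (1 - e)) * (u + L * (1 - e))
        = w * u + (w * L) * (1 - e) + K * ((1 - e) * u) + K * ((1 - e) * L) * (1 - e) := by
          noncomm_ring
      _ = w * u + L * (w * (1 - e)) + K * ((1 - e) * u)
            + (K * L) * ((1 - e) * (1 - e)) := by
          rw [← hLc w, ← hLc (1 - e)]; noncomm_ring
      _ = 1 := by rw [u4, we, ue', hKL, hee2]; noncomm_ring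
  · rw [e1]
    calc (u + L * (1 - e)) * (w + K * (1 - e))
        = u * w + (u * K) * (1 - e) + L * ((1 - e) * w) + L * ((1 - e) * K) * (1 - e) := by
          noncomm_ring
      _ = u * w + K * (u * (1 - e)) + L * ((1 - e) * w)
            + (L * K) * ((1 - e) * (1 - e)) := by
          rw [← hKc u, ← hKc (1 - e)]; noncomm_ring
      _ = 1 := by rw [u3, ue, we', hLK, hee2]; noncomm_ring

lemma srank_eq_one (hss : JacobsonSemisimple A) (x : A) (hx : x ≠ 0)
    (h : ∀ w, ∃ α : ℂ, x * w * x = α • x) : srank x = 1 := by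
  apply le_antisymm
  · refine iSup_le fun w => ?_
    obtain ⟨α, hα⟩ := h w
    have hsub : nzSpec (w * x) ⊆ {α} := by
      rintro k ⟨hk, hk0⟩
      have hk0 : k ≠ 0 := hk0
      by_contra hne
      have hne : k ≠ α := hne
      have h1 := spectrum.subset_polynomial_aeval (w * x)
        (Polynomial.X * Polynomial.X - Polynomial.C α * Polynomial.X : Polynomial ℂ) ⟨k, hk, rfl⟩
      have h2 : Polynomial.aeval (w * x)
          (Polynomial.X * Polynomial.X - Polynomial.C α * Polynomial.X : Polynomial ℂ) = 0 := by
        simp only [map_sub, map_mul, Polynomial.aeval_X, Polynomial.aeval_C]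
        have : w * x * (w * x) = w * (x * w * x) := by noncomm_ring
        rw [this, hα, mul_smul_comm, Algebra.smul_def, sub_self]
      rw [h2] at h1
      have h3 := spectrum.norm_le_norm_of_mem h1
      rw [norm_zero, norm_le_zero_iff] at h3
      simp only [Polynomial.eval_sub, Polynomial.eval_mul, Polynomial.eval_X,
        Polynomial.eval_C] at h3
      have h4 : k * (k - α) = 0 := by linear_combination h3
      rcases mul_eq_zero.1 h4 with h5 | h5
      · exact hk0 h5
      · exact hne (sub_eq_zero.1 h5)
    exact (Set.encard_le_encard hsub).trans (by simp)
  · rw [Order.one_le_iff_pos, pos_iff_ne_zero]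
    intro h0
    apply hx
    apply eq_zero_of_qn hss
    intro y
    have := ENat.iSup_eq_zero.1 h0 y
    exact Set.encard_eq_zero.1 this

lemma not_isUnit_sub {P p x : A} {α : ℂ} (hx : x ≠ 0) (hPp : P * p = 1) (hα : α ≠ 0)
    (h : x * p * x = α • x) : ¬ IsUnit (P - α⁻¹ • x) := by
  intro hu
  have h1 : (P - α⁻¹ • x) * (p * x) = 0 := by
    rw [sub_mul, ← mul_assoc, hPp, smul_mul_assoc, ← mul_assoc, h, smul_smul,
      inv_mul_cancel₀ hα]; simp
  have h2 : p * x = 0 := hu.mul_right_eq_zero.1 h1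
  apply hx
  rw [← one_mul x, ← hPp, mul_assoc, h2, mul_zero]

lemma isUnit_sub {P p x : A} {α t : ℂ} (hPp : P * p = 1) (hpP : p * P = 1) (hα : t * α ≠ 1)
    (h : x * p * x = α • x) : IsUnit (P - t • x) := by
  have h1 : (1 : ℂ) - t * α ≠ 0 := sub_ne_zero.2 (Ne.symm hα)
  set c := t / (1 - t * α) with hc
  have hct : c - t - t * c * α = 0 := by rw [hc]; field_simp; ring
  have hpx : (p * x) * (p * x) = α • (p * x) := by
    have : (p * x) * (p * x) = p * (x * p * x) := by noncomm_ring
    rw [this, h, mul_smul_comm]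
  have hz : c • (p * x) - t • (p * x) - (t * c * α) • (p * x) = 0 := by
    rw [← sub_smul, ← sub_smul, hct, zero_smul]
  have e1 : (1 - t • (p * x)) * (1 + c • (p * x)) = 1 := by
    rw [sub_mul, one_mul, mul_add, mul_one, smul_mul_smul_comm, hpx, smul_smul]
    rw [← sub_eq_zero, ← hz]; abel
  have e2 : (1 + c • (p * x)) * (1 - t • (p * x)) = 1 := by
    rw [mul_sub, mul_one, add_mul, one_mul, smul_mul_smul_comm, hpx, smul_smul,
      mul_comm c t]
    rw [← sub_eq_zero, ← hz]; abel
  have e3 : P - t • x = P * (1 - t • (p * x)) := by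
    rw [mul_sub, mul_one, mul_smul_comm, ← mul_assoc, hPp, one_mul]
  rw [e3]
  exact IsUnit.mul ⟨⟨P, p, hPp, hpP⟩, rfl⟩ ⟨⟨_, _, e1, e2⟩, rfl⟩

lemma sandwich_zero (hss : JacobsonSemisimple A) (a b : A)
    (hab : ∀ x : A, srank x = 1 → spectrum ℂ (a + x) = spectrum ℂ (b + x))
    (x : A) (h : ∀ w, ∃ α : ℂ, x * w * x = α • x) : x * (a - b) * x = 0 := by
  by_cases hx : x = 0
  · simp [hx]
  have transfer : ∀ s t : ℂ, s ≠ 0 → t ≠ 0 →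
      (IsUnit (1 - s • a - t • x) ↔ IsUnit (1 - s • b - t • x)) := by
    intro s t hs ht
    have hc : s⁻¹ * t ≠ 0 := mul_ne_zero (inv_ne_zero hs) ht
    have hr : srank ((s⁻¹ * t) • x) = 1 := by
      apply srank_eq_one hss _ (smul_ne_zero hc hx)
      intro w
      obtain ⟨α, hα⟩ := h w
      refine ⟨s⁻¹ * t * α, ?_⟩
      rw [smul_mul_assoc, smul_mul_smul_comm, hα, smul_smul, smul_smul]
      congr 1; ring
    have hsp := hab _ hr
    have conv : ∀ c : A, IsUnit (1 - s • c - t • x) ↔ s⁻¹ ∉ spectrum ℂ (c + (s⁻¹ * t) • x) := by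
      intro c
      rw [spectrum.notMem_iff]
      have e1 : 1 - s • c - t • x = algebraMap ℂ A s *
          (algebraMap ℂ A s⁻¹ - (c + (s⁻¹ * t) • x)) := by
        rw [mul_sub, ← map_mul, mul_inv_cancel₀ hs, map_one, ← Algebra.smul_def, smul_add,
          smul_smul, mul_inv_cancel_left₀ hs]
        abel
      have hu : IsUnit (algebraMap ℂ A s) := (IsUnit.mk0 s hs).map (algebraMap ℂ A)
      rw [e1]
      obtain ⟨u, hu⟩ := hu
      rw [← hu, Units.isUnit_units_mul]
    rw [conv a, conv b, hsp]
  have hcont : ∀ c : A, Tendsto (fun s : ℂ => Ring.inverse (1 - s • c)) (𝓝[≠] 0) (𝓝 1) := by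
    intro c
    have h1 : ContinuousAt (Ring.inverse : A → A) ((1 : Aˣ) : A) := NormedRing.inverse_continuousAt 1
    have h2 : Tendsto (fun s : ℂ => 1 - s • c) (𝓝[≠] 0) (𝓝 1) := by
      have : Continuous (fun s : ℂ => 1 - s • c) := by fun_prop
      have h3 := this.tendsto 0
      simp only [zero_smul, sub_zero] at h3
      exact h3.mono_left nhdsWithin_le_nhds
    have h4 := h1.tendsto
    simp only [Units.val_one, Ring.inverse_one] at h4
    exact h4.comp h2
  have hunit : ∀ c : A, ∀ᶠ s : ℂ in 𝓝[≠] 0, IsUnit (1 - s • c) := by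
    intro c
    have h2 : Tendsto (fun s : ℂ => 1 - s • c) (𝓝[≠] 0) (𝓝 1) := by
      have : Continuous (fun s : ℂ => 1 - s • c) := by fun_prop
      have h3 := this.tendsto 0
      simp only [zero_smul, sub_zero] at h3
      exact h3.mono_left nhdsWithin_le_nhds
    exact h2.eventually (Units.nhds (1 : Aˣ))
  have hlim : Tendsto (fun s : ℂ => x * (Ring.inverse (1 - s • a) * (a - b) *
      Ring.inverse (1 - s • b)) * x) (𝓝[≠] 0) (𝓝 (x * (1 * (a - b) * 1) * x)) :=
    ((((hcont a).mul_const _).mul (hcont b)).const_mul x).mul_const x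
  have hev : ∀ᶠ s : ℂ in 𝓝[≠] 0, x * (Ring.inverse (1 - s • a) * (a - b) *
      Ring.inverse (1 - s • b)) * x = 0 := by
    filter_upwards [hunit a, hunit b, self_mem_nhdsWithin] with s ha hb hs
    have hs : s ≠ 0 := hs
    have hPp := Ring.mul_inverse_cancel _ ha
    have hpP := Ring.inverse_mul_cancel _ ha
    have hQq := Ring.mul_inverse_cancel _ hb
    have hqQ := Ring.inverse_mul_cancel _ hb
    set P := 1 - s • a with hP
    set Q := 1 - s • b with hQ
    set p := Ring.inverse P with hp
    set q := Ring.inverse Q with hq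
    obtain ⟨α, hα⟩ := h p
    obtain ⟨β, hβ⟩ := h q
    have hαβ : α = β := by
      by_cases hα0 : α = 0
      · by_cases hβ0 : β = 0
        · rw [hα0, hβ0]
        · have h1 := not_isUnit_sub hx hQq hβ0 hβ
          rw [hQ, ← transfer s β⁻¹ hs (inv_ne_zero hβ0)] at h1
          have h2 : β⁻¹ * α = 1 := by
            by_contra hne
            exact h1 (isUnit_sub hPp hpP hne hα)
          field_simp at h2
          exact h2
      · have h1 := not_isUnit_sub hx hPp hα0 hα
        rw [hP, transfer s α⁻¹ hs (inv_ne_zero hα0)] at h1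
        have h2 : α⁻¹ * β = 1 := by
          by_contra hne
          exact h1 (isUnit_sub hQq hqQ hne hβ)
        field_simp at h2
        exact h2.symm
    have h3 : s • (p * (a - b) * q) = p - q := by
      have h4 : s • (a - b) = Q - P := by rw [hP, hQ, smul_sub]; abel
      calc s • (p * (a - b) * q) = p * (s • (a - b)) * q := by
            rw [mul_smul_comm, smul_mul_assoc]
        _ = p * (Q * q) - (p * P) * q := by rw [h4]; noncomm_ring
        _ = p - q := by rw [hQq, hpP]; simp
    have h5 : s • (x * (p * (a - b) * q) * x) = 0 := by
      rw [← smul_mul_assoc, ← mul_smul_comm, h3, mul_sub, sub_mul, hα, hβ, hαβ, sub_self]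
    exact (smul_eq_zero.1 h5).resolve_left hs
  have h0 := tendsto_nhds_unique (hlim.congr' hev) tendsto_const_nhds
  simpa using h0

lemma main_aux (hss : JacobsonSemisimple A) (a b : A) (ha : a ∈ socle A) (hb : b ∈ socle A)
    (hab : ∀ x : A, srank x = 1 → spectrum ℂ (a + x) = spectrum ℂ (b + x)) : a = b := by
  have ha : srank a ≠ ⊤ := ha
  have hb : srank b ≠ ⊤ := hb
  set c := a - b with hc
  have h1 : ∀ e : A, (∀ z, ∃ α : ℂ, e * z * e = algebraMap ℂ A α * e) →
      ∀ y, c * (y * e) = 0 := by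
    intro e he y
    apply eq_zero_of_qn hss
    intro z
    apply nzSpec_of_cube
    have h2 : (y * e * z) * c * (y * e * z) = 0 := by
      apply sandwich_zero hss a b hab
      intro w
      obtain ⟨α, hα⟩ := he (z * w * y)
      refine ⟨α, ?_⟩
      calc y * e * z * w * (y * e * z) = y * (e * (z * w * y) * e) * z := by noncomm_ring
        _ = α • (y * e * z) := by
          rw [hα, ← Algebra.smul_def, mul_smul_comm, smul_mul_assoc]
    calc z * (c * (y * e)) * (z * (c * (y * e))) * (z * (c * (y * e)))
        = z * c * ((y * e * z) * c * (y * e * z)) * c * (y * e) := by noncomm_ring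
      _ = 0 := by rw [h2]; simp
  have h2 : ∀ d : A, srank d ≠ ⊤ → ∀ y, c * y * d = 0 := by
    intro d hd y
    by_contra h0
    obtain ⟨e, g, e1, e2, e3, e4⟩ := exists_min_idem hss (c * y * d)
      (ne_top_of_le_ne_top hd (srank_mul_le _ _)) h0
    apply e3
    calc e = (g * (c * y * d)) * e := by rw [← e1, e2]
      _ = g * (c * ((y * d) * e)) := by noncomm_ring
      _ = 0 := by rw [h1 e e4]; simp
  have h3 : c = 0 := by
    apply eq_zero_of_qn hss
    intro y
    apply nzSpec_of_cube
    have h4 : c * y * c = 0 := by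
      nth_rewrite 2 [hc]
      rw [mul_sub, h2 a ha, h2 b hb, sub_zero]
    calc y * c * (y * c) * (y * c) = y * (c * y * c) * (y * c) := by noncomm_ring
      _ = 0 := by rw [h4]; simp
  exact sub_eq_zero.1 h3

end helpers

theorem socle_eq_iff_spectrum_add_rank_one
    {A : Type*} [NormedRing A] [NormOneClass A] [NormedAlgebra ℂ A] [CompleteSpace A]
    (hss : JacobsonSemisimple A) (a b : A) (ha : a ∈ socle A) (hb : b ∈ socle A) :
    a = b ↔ ∀ x : A, srank x = 1 → spectrum ℂ (a + x) = spectrum ℂ (b + x) := by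
  exact ⟨fun h x _ => by rw [h], main_aux hss a b ha hb⟩
end
end

section
/- Let A be a complex semisimple unital Banach algebra whose socle Soc A is a minimal two-sided ideal. Let a, b ∈ A with b = pt, where p is an idempotent belonging to Soc A and t is invertible in A. If ρ(ax) ≤ ρ(bx) for all x ∈ A, then a = λb for some λ ∈ ℂ with |λ| ≤ 1. -/
open Complex

noncomputable section

/-- Nonzero spectral values are symmetric under swapping factors. -/
lemma aux_specRad_comm_le {A : Type*} [Ring A] [Algebra ℂ A] (x y : A) :
    spectralRadius ℂ (x * y) ≤ spectralRadius ℂ (y * x) := by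
  unfold spectralRadius
  refine iSup₂_le fun k hk => ?_
  by_cases h0 : k = 0
  · simp [h0]
  · have h1 : k ∈ spectrum ℂ (x * y) \ {0} := ⟨hk, h0⟩
    rw [spectrum.nonzero_mul_comm] at h1
    exact le_iSup₂ (f := fun k (_ : k ∈ spectrum ℂ (y * x)) => (‖k‖₊ : ENNReal)) k h1.1

lemma aux_specRad_comm {A : Type*} [Ring A] [Algebra ℂ A] (x y : A) :
    spectralRadius ℂ (x * y) = spectralRadius ℂ (y * x) :=
  le_antisymm (aux_specRad_comm_le x y) (aux_specRad_comm_le y x)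

lemma aux_eq_zero {A : Type*} [NormedRing A] [NormedAlgebra ℂ A]
    (hss : JacobsonSemisimple A) (z : A) (hz : ∀ y, spectralRadius ℂ (y * z) = 0) : z = 0 := by
  have h : z ∈ TwoSidedIdeal.jacobson (⊥ : TwoSidedIdeal A) := by
    rw [TwoSidedIdeal.mem_jacobson_iff]
    intro y
    have h1 : (-1 : ℂ) ∉ spectrum ℂ (y * z) := by
      intro hm
      have h2 : (‖(-1 : ℂ)‖₊ : ENNReal) ≤ spectralRadius ℂ (y * z) :=
        le_iSup₂ (f := fun k (_ : k ∈ spectrum ℂ (y * z)) => (‖k‖₊ : ENNReal)) (-1) hm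
      rw [hz y] at h2
      simp at h2
    rw [spectrum.notMem_iff] at h1
    have h2 : IsUnit (y * z + 1) := by
      have := h1.neg
      simpa [add_comm] using this
    obtain ⟨u, hu⟩ := h2
    refine ⟨↑u⁻¹, ?_⟩
    have h3 : (↑u⁻¹ : A) * (y * z + 1) = 1 := by rw [← hu]; simp
    have h4 : (↑u⁻¹ : A) * y * z + ↑u⁻¹ - 1 = 0 := by
      rw [← h3]; noncomm_ring
    rw [h4]
    exact zero_mem _
  rw [hss] at h
  simpa using h

lemma aux_exists_max {A : Type*} [Ring A]
    (hss : JacobsonSemisimple A) (z : A) (hz : z ≠ 0) :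
    ∃ L : Ideal A, L.IsMaximal ∧ z ∉ L := by
  by_contra hcon
  push Not at hcon
  apply hz
  have h : z ∈ TwoSidedIdeal.asIdeal (TwoSidedIdeal.jacobson (⊥ : TwoSidedIdeal A)) := by
    rw [TwoSidedIdeal.asIdeal_jacobson, Ideal.jacobson, Ideal.mem_sInf]
    rintro J ⟨_, hJ⟩
    exact hcon J hJ
  rw [hss] at h
  simpa using h

section modules

variable {A : Type*} [NormedRing A] [NormedAlgebra ℂ A]

lemma aux_eigen {M : Type*} [AddCommGroup M] [Module A M] [Module ℂ M] [IsScalarTower ℂ A M]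
    (x : A) (m : M) (hm : m ≠ 0) (k : ℂ) (h : x • m = k • m) : k ∈ spectrum ℂ x := by
  rw [spectrum.mem_iff]
  rintro ⟨u, hu⟩
  have h1 : (u : A) • m = 0 := by
    rw [hu, sub_smul, h, algebraMap_smul, sub_self]
  apply hm
  calc m = ((↑u⁻¹ : A) * u) • m := by simp
    _ = 0 := by rw [mul_smul, h1, smul_zero]

/-- Schur's lemma for a quotient by a maximal left ideal. -/
lemma aux_schur [CompleteSpace A] (L : Ideal A) [hL : L.IsMaximal]
    (T : Module.End A (A ⧸ L)) : ∃ k : ℂ, ∀ m, T m = k • m := by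
  have : IsSimpleModule A (A ⧸ L) := isSimpleModule_iff_isCoatom.2 hL.out
  have : Nontrivial (A ⧸ L) := IsSimpleModule.nontrivial A (A ⧸ L)
  have hsm : ∀ (x : A) (m : A ⧸ L), ‖x • m‖ ≤ ‖x‖ * ‖m‖ := by
    intro x m
    refine le_of_forall_pos_le_add fun ε hε => ?_
    obtain ⟨y, rfl, hy⟩ := Submodule.Quotient.norm_mk_lt m
      (show 0 < ε / (‖x‖ + 1) by positivity)
    rw [← Submodule.Quotient.mk_smul]
    calc ‖(Submodule.Quotient.mk (x • y) : A ⧸ L)‖ ≤ ‖x • y‖ := Submodule.Quotient.norm_mk_le _ _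
      _ ≤ ‖x‖ * ‖y‖ := norm_mul_le _ _
      _ ≤ ‖x‖ * (‖(Submodule.Quotient.mk y : A ⧸ L)‖ + ε / (‖x‖ + 1)) := by gcongr
      _ = ‖x‖ * ‖(Submodule.Quotient.mk y : A ⧸ L)‖ + ‖x‖ * (ε / (‖x‖ + 1)) := by ring
      _ ≤ _ := by
        gcongr
        rw [← mul_div_assoc, div_le_iff₀ (by positivity)]
        nlinarith [norm_nonneg x]
  let e : A ⧸ L := Submodule.Quotient.mk 1
  have hT : ∀ m, ‖T m‖ ≤ ‖T e‖ * ‖m‖ := by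
    intro m
    refine le_of_forall_pos_le_add fun ε hε => ?_
    obtain ⟨y, rfl, hy⟩ := Submodule.Quotient.norm_mk_lt m
      (show 0 < ε / (‖T e‖ + 1) by positivity)
    have : (Submodule.Quotient.mk y : A ⧸ L) = y • e := by
      simp [e, ← Submodule.Quotient.mk_smul]
    calc ‖T (Submodule.Quotient.mk y : A ⧸ L)‖ = ‖y • T e‖ := by rw [this, map_smul]
      _ ≤ ‖y‖ * ‖T e‖ := hsm _ _
      _ ≤ (‖(Submodule.Quotient.mk y : A ⧸ L)‖ + ε / (‖T e‖ + 1)) * ‖T e‖ := by gcongr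
      _ = ‖T e‖ * ‖(Submodule.Quotient.mk y : A ⧸ L)‖ + ‖T e‖ * (ε / (‖T e‖ + 1)) := by ring
      _ ≤ _ := by
        gcongr
        rw [← mul_div_assoc, div_le_iff₀ (by positivity)]
        nlinarith [norm_nonneg (T e)]
  let S : (A ⧸ L) →L[ℂ] (A ⧸ L) := (T.restrictScalars ℂ).mkContinuous ‖T e‖ hT
  have hS : ∀ m, S m = T m := fun m => rfl
  obtain ⟨k, hk⟩ := spectrum.nonempty S
  refine ⟨k, ?_⟩
  have : SMulCommClass A ℂ (A ⧸ L) := by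
    constructor
    intro x c m
    rw [← algebraMap_smul A c m, ← algebraMap_smul A c (x • m), ← mul_smul, ← mul_smul,
      Algebra.commutes]
  let R : Module.End A (A ⧸ L) :=
    { toFun := fun m => k • m - T m
      map_add' := fun m n => by simp only [smul_add, map_add]; abel
      map_smul' := fun x m => by
        simp only [map_smul, RingHom.id_apply, smul_sub]
        rw [smul_comm] }
  rcases LinearMap.bijective_or_eq_zero R with hb | h0
  · exfalso
    rw [spectrum.mem_iff] at hk
    apply hk
    rw [ContinuousLinearMap.isUnit_iff_bijective]
    have : ⇑(algebraMap ℂ ((A ⧸ L) →L[ℂ] (A ⧸ L)) k - S) = ⇑R := by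
      ext m
      simp [R, hS, Algebra.algebraMap_eq_smul_one]
    rw [this]
    exact hb
  · intro m
    have : R m = 0 := by rw [h0]; rfl
    exact (sub_eq_zero.1 this).symm

lemma aux_density [CompleteSpace A] (L : Ideal A) [hL : L.IsMaximal]
    (f : (A ⧸ L) →ₗ[ℂ] (A ⧸ L)) (s : Finset (A ⧸ L)) : ∃ r : A, ∀ m ∈ s, f m = r • m := by
  have : IsSimpleModule A (A ⧸ L) := isSimpleModule_iff_isCoatom.2 hL.out
  let F : Module.End (Module.End A (A ⧸ L)) (A ⧸ L) :=
    { toFun := f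
      map_add' := f.map_add
      map_smul' := fun T m => by
        obtain ⟨k, hk⟩ := aux_schur L T
        simp [hk] }
  exact jacobson_density F s

/-- The image of a finite-rank element in an irreducible module is finite-dimensional. -/
lemma aux_finite {M : Type*} [AddCommGroup M] [Module A M] [Module ℂ M] [IsScalarTower ℂ A M]
    (hd : ∀ (f : M →ₗ[ℂ] M) (s : Finset M), ∃ r : A, ∀ m ∈ s, f m = r • m)
    (p : A) (hps : p ∈ socle A) (W : Submodule ℂ M)
    (hW : ∀ w ∈ W, p • w = w) : Module.Finite ℂ W := by
  classical
  by_contra hfin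
  apply hps
  rw [ENat.eq_top_iff_forall_ge]
  intro n
  have hr : (n : Cardinal) ≤ Module.rank ℂ W := by
    have : Cardinal.aleph0 ≤ Module.rank ℂ W := by
      by_contra hlt
      exact hfin (Module.rank_lt_aleph0_iff.1 (not_le.1 hlt))
    exact (Cardinal.natCast_lt_aleph0.le).trans this
  obtain ⟨v, hv⟩ := exists_linearIndependent_of_le_rank hr
  have hv' : LinearIndependent ℂ (fun i => (v i : M)) := hv.map' W.subtype (by simp)
  let B := Module.Basis.extend hv'.linearIndepOn_id
  let g : M → M := fun m => if h : ∃ i, (v i : M) = m then ((h.choose : ℕ) + 1 : ℂ) • m else 0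
  let f : M →ₗ[ℂ] M := B.constr ℂ (fun i => g i)
  have hf : ∀ i, f (v i) = ((i : ℕ) + 1 : ℂ) • (v i : M) := by
    intro i
    have hmem : (v i : M) ∈ hv'.linearIndepOn_id.extend (Set.subset_univ _) :=
      hv'.linearIndepOn_id.subset_extend _ ⟨i, rfl⟩
    have h1 : f (B ⟨v i, hmem⟩) = g (v i) := by
      simp only [f, Module.Basis.constr_basis]
    have h2 : B ⟨v i, hmem⟩ = v i := by simp [B]
    rw [h2] at h1
    rw [h1]
    have hex : ∃ j, (v j : M) = v i := ⟨i, rfl⟩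
    have h3 : hex.choose = i := hv'.injective hex.choose_spec
    simp only [g]
    rw [dif_pos hex, h3]
  obtain ⟨r, hr⟩ := hd f (Finset.univ.image fun i => (v i : M))
  have hspec : ∀ i : Fin n, ((i : ℕ) + 1 : ℂ) ∈ nzSpec (r * p) := by
    intro i
    refine ⟨aux_eigen (r * p) (v i : M) (hv'.ne_zero i) _ ?_, ?_⟩
    · rw [mul_smul, hW _ (v i).2, ← hr _ (Finset.mem_image_of_mem _ (Finset.mem_univ i)), hf]
    · have : ((i : ℕ) : ℂ) + 1 ≠ 0 := Nat.cast_add_one_ne_zero _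
      simpa using this
  have hinj : Function.Injective (fun i : Fin n => ((i : ℕ) + 1 : ℂ)) := by
    intro i j hij
    simpa [Fin.ext_iff] using hij
  calc (n : ℕ∞) = (Set.range (fun i : Fin n => ((i : ℕ) + 1 : ℂ))).encard := by
        rw [← Set.image_univ, hinj.encard_image]; simp
    _ ≤ (nzSpec (r * p)).encard := by
        apply Set.encard_le_encard
        rintro _ ⟨i, rfl⟩
        exact hspec i
    _ ≤ srank p := le_iSup (fun x : A => (nzSpec (x * p)).encard) r

/-- The main reduction: the case `t = 1`. -/
lemma aux_main [NormOneClass A] [CompleteSpace A]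
    (hss : JacobsonSemisimple A) (hmin : SocleIsMinimalTwoSidedIdeal A)
    (a p : A) (hp : p * p = p) (hpsoc : p ∈ socle A)
    (h : ∀ x : A, spectralRadius ℂ (a * x) ≤ spectralRadius ℂ (p * x)) :
    ∃ lam : ℂ, ‖lam‖ ≤ 1 ∧ a = lam • p := by
  have hle : ∀ (x : A) (k : ℂ), k ∈ spectrum ℂ x → (‖k‖₊ : ENNReal) ≤ spectralRadius ℂ x :=
    fun x k hk => le_iSup₂ (f := fun k (_ : k ∈ spectrum ℂ x) => (‖k‖₊ : ENNReal)) k hk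
  have hap : a * p = a := by
    have : a * (1 - p) = 0 := by
      apply aux_eq_zero hss
      intro y
      rw [aux_specRad_comm, mul_assoc]
      refine le_antisymm ((h _).trans ?_) bot_le
      have : p * ((1 - p) * y) = 0 := by rw [← mul_assoc, mul_sub, hp]; simp
      rw [this]; simp
    rw [mul_sub, mul_one, sub_eq_zero] at this
    exact this.symm
  have hpa : p * a = a := by
    have : (1 - p) * a = 0 := by
      apply aux_eq_zero hss
      intro y
      rw [← mul_assoc, aux_specRad_comm]
      refine le_antisymm ((h _).trans ?_) bot_le
      rw [aux_specRad_comm]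
      have : y * (1 - p) * p = 0 := by rw [mul_assoc, sub_mul, hp]; simp
      rw [this]; simp
    rw [sub_mul, one_mul, sub_eq_zero] at this
    exact this.symm
  by_cases hp0 : p = 0
  · exact ⟨0, by simp, by rw [← hap, hp0]; simp⟩
  obtain ⟨L, hL, hpL⟩ := aux_exists_max hss p hp0
  have := hL
  have hd := aux_density L
  obtain ⟨I, hI, hI0, hImin⟩ := hmin
  have hmemI : ∀ x, x ∈ I ↔ x ∈ socle A := fun x => by rw [← hI]; rfl
  have hpI : p ∈ I := (hmemI p).2 hpsoc
  have hcomm : ∀ (x : A) (c : ℂ) (m : A ⧸ L), x • c • m = c • x • m := by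
    intro x c m
    rw [← algebraMap_smul A c m, ← algebraMap_smul A c (x • m), ← mul_smul, ← mul_smul,
      Algebra.commutes]
  have hpe : p • (Submodule.Quotient.mk 1 : A ⧸ L) ≠ 0 := by
    rw [← Submodule.Quotient.mk_smul, Ne, Submodule.Quotient.mk_eq_zero]
    simpa using hpL
  -- faithful on the socle
  have hfaith : ∀ x ∈ I, (∀ m : A ⧸ L, x • m = 0) → x = 0 := by
    let K : TwoSidedIdeal A := TwoSidedIdeal.mk' {x | ∀ m : A ⧸ L, x • m = 0}
      (fun m => zero_smul A m)
      (fun {x y} hx hy m => by rw [add_smul, hx, hy, add_zero])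
      (fun {x} hx m => by rw [neg_smul, hx, neg_zero])
      (fun {x y} hy m => by rw [mul_smul, hy, smul_zero])
      (fun {x y} hx m => by rw [mul_smul, hx])
    have hK : ∀ x, x ∈ K ↔ ∀ m : A ⧸ L, x • m = 0 := fun x => by
      simp [K, TwoSidedIdeal.mem_mk']
    intro x hxI hx
    rcases hImin (K ⊓ I) inf_le_right with h0 | h1
    · have : x ∈ K ⊓ I := (TwoSidedIdeal.mem_inf A).2 ⟨(hK x).2 hx, hxI⟩
      rw [h0] at this
      simpa using this
    · exfalso
      have : p ∈ K ⊓ I := by rw [h1]; exact hpI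
      exact hpe ((hK p).1 ((TwoSidedIdeal.mem_inf A).1 this).1 _)
  let W : Submodule ℂ (A ⧸ L) :=
    { carrier := {w | p • w = w}
      add_mem' := fun {x y} hx hy => by
        simp only [Set.mem_ofPred_eq] at *; rw [smul_add, hx, hy]
      zero_mem' := smul_zero p
      smul_mem' := fun c x hx => by
        simp only [Set.mem_ofPred_eq] at *; rw [hcomm, hx] }
  have hW : ∀ w, w ∈ W ↔ p • w = w := fun w => Iff.rfl
  have hfin : Module.Finite ℂ W := aux_finite hd p hpsoc W (fun w hw => hw)
  let T : W →ₗ[ℂ] W :=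
    { toFun := fun w => ⟨a • (w : A ⧸ L), by rw [hW, ← mul_smul, hpa]⟩
      map_add' := fun x y => by ext; simp
      map_smul' := fun c x => by ext; simp [hcomm] }
  have hT : ∀ w : W, ((T w : W) : A ⧸ L) = a • (w : A ⧸ L) := fun w => rfl
  have hscal : ∀ w : W, ¬ LinearIndependent ℂ ![w, T w] := by
    intro w hli
    have hli' : LinearIndependent ℂ ![(w : A ⧸ L), a • (w : A ⧸ L)] := by
      have := hli.map' W.subtype (by simp)
      have he : (⇑W.subtype ∘ ![w, T w]) = ![(w : A ⧸ L), a • (w : A ⧸ L)] := by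
        funext i
        fin_cases i <;> rfl
      rw [he] at this
      exact this
    obtain ⟨φ, hφ0, hφ1⟩ : ∃ φ : (A ⧸ L) →ₗ[ℂ] ℂ,
        φ (w : A ⧸ L) = 0 ∧ φ (a • (w : A ⧸ L)) = 1 := by
      have hns : a • (w : A ⧸ L) ∉ Submodule.span ℂ {(w : A ⧸ L)} := by
        rw [Submodule.mem_span_singleton]
        rintro ⟨c, hc⟩
        have := LinearIndependent.pair_iff.1 hli' c (-1) (by rw [hc]; simp)
        simp at this
      obtain ⟨φ, h1, h2⟩ := Submodule.exists_le_ker_of_notMem hns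
      refine ⟨(φ (a • (w : A ⧸ L)))⁻¹ • φ, ?_, ?_⟩
      · have : φ (w : A ⧸ L) = 0 := h2 (Submodule.mem_span_singleton_self _)
        simp [this]
      · simp [h1]
    obtain ⟨s, hs⟩ : W.FG := Module.Finite.iff_fg.1 hfin
    obtain ⟨x, hx⟩ := hd (φ.smulRight (w : A ⧸ L)) s
    have hxW : ∀ m ∈ W, x • m = φ m • (w : A ⧸ L) := by
      intro m hm
      rw [← hs] at hm
      induction hm using Submodule.span_induction with
      | mem m hm => exact (hx m hm).symm
      | zero => simp
      | add m n _ _ h1 h2 => rw [smul_add, h1, h2, map_add, add_smul]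
      | smul c m _ h1 => rw [hcomm, h1, map_smul, smul_smul, smul_eq_mul]
    have hwW : p • (w : A ⧸ L) = w := w.2
    have hy2 : (p * (x * p)) * (p * (x * p)) = 0 := by
      apply hfaith
      · exact I.mul_mem_right _ _ (I.mul_mem_right _ _ hpI)
      · intro m
        have hpm : p • m ∈ W := by rw [hW, ← mul_smul, hp]
        simp only [mul_smul]
        rw [hxW _ hpm, hcomm, hcomm, hwW, hcomm, hcomm, hwW, hxW _ w.2, hφ0]
        simp
    have hy0 : spectralRadius ℂ (p * (x * p)) = 0 := by
      refine le_antisymm ?_ bot_le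
      refine iSup₂_le fun k hk => ?_
      have hk2 : k ^ 2 ∈ spectrum ℂ ((p * (x * p)) ^ 2) :=
        spectrum.pow_mem_pow _ 2 hk
      rw [sq (p * (x * p)), hy2] at hk2
      have : Nontrivial A := ⟨p, 0, hp0⟩
      rw [spectrum.zero_eq, Set.mem_singleton_iff] at hk2
      have : k = 0 := by simpa using hk2
      simp [this]
    have hw0 : (w : A ⧸ L) ≠ 0 := hli'.ne_zero 0
    have h1 : (1 : ℂ) ∈ spectrum ℂ ((x * p) * a) := by
      refine aux_eigen _ (w : A ⧸ L) hw0 1 ?_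
      rw [mul_assoc, hpa, mul_smul, ← hT, hxW _ (T w).2, hT, hφ1]
    have h2 := hle _ _ h1
    rw [aux_specRad_comm] at h2
    have h3 := h2.trans (h (x * p))
    rw [hy0] at h3
    simp at h3
  obtain ⟨k, hk⟩ := LinearMap.exists_eq_smul_id_of_forall_notLinearIndependent hscal
  have hak : ∀ m : A ⧸ L, a • m = k • p • m := by
    intro m
    have hpm : p • m ∈ W := by rw [hW, ← mul_smul, hp]
    have h1 := hT ⟨p • m, hpm⟩
    rw [hk] at h1
    simp only [← mul_smul, hap] at h1
    rw [← h1]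
    rfl
  have haI : a ∈ I := by rw [← hpa]; exact I.mul_mem_right _ _ hpI
  have hkp : k • p ∈ I := by
    rw [Algebra.smul_def]; exact I.mul_mem_left _ _ hpI
  refine ⟨k, ?_, ?_⟩
  · have h1 : k ∈ spectrum ℂ (a * 1) := by
      refine aux_eigen _ _ hpe k ?_
      rw [mul_one, hak, ← mul_smul, hp]
    have h2 := (hle _ _ h1).trans (h 1)
    have h3 : spectralRadius ℂ (p * 1) ≤ 1 := by
      refine iSup₂_le fun c hc => ?_
      rw [mul_one] at hc
      have hi : IsIdempotentElem p := hp
      have hc1 : c = 0 ∨ c = 1 := by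
        simpa using hi.spectrum_subset ℂ hc
      rcases hc1 with rfl | rfl <;> simp
    have h4 := h2.trans h3
    exact_mod_cast h4
  · rw [← sub_eq_zero]
    apply hfaith _ (I.sub_mem haI hkp)
    intro m
    rw [sub_smul, hak, smul_assoc, sub_self]

end modules

theorem scalar_multiple_of_spectralRadius_le_of_idempotent_mul_unit
    {A : Type*} [NormedRing A] [NormOneClass A] [NormedAlgebra ℂ A] [CompleteSpace A]
    (hss : JacobsonSemisimple A) (hmin : SocleIsMinimalTwoSidedIdeal A)
    (a b p t : A) (hp : p * p = p) (hpsoc : p ∈ socle A) (ht : IsUnit t) (hb : b = p * t)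
    (h : ∀ x : A, spectralRadius ℂ (a * x) ≤ spectralRadius ℂ (b * x)) :
    ∃ lam : ℂ, ‖lam‖ ≤ 1 ∧ a = lam • b := by
  obtain ⟨u, rfl⟩ := ht
  obtain ⟨k, hk, hk'⟩ := aux_main hss hmin (a * ↑u⁻¹) p hp hpsoc (by
    intro x
    have := h (↑u⁻¹ * x)
    rw [hb] at this
    simpa [mul_assoc] using this)
  refine ⟨k, hk, ?_⟩
  rw [hb, ← smul_mul_assoc, ← hk']
  simp [mul_assoc]
end
end

section
/- Let A be a C*-algebra (complex, unital). Then A is prime if and only if for all a, b ∈ A the following are equivalent: (i) ρ(ax) ≤ ρ(bx) for all x ∈ A; (ii) a = λb for some λ ∈ ℂ with |λ| ≤ 1. -/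
open Complex

noncomputable section

def ElemPrime (A : Type*) [Ring A] : Prop :=
  ∀ x y : A, (∀ z, x * z * y = 0) → x = 0 ∨ y = 0

lemma elemPrime_of_prime {A : Type*} [Ring A] (hA : IsPrimeAlgebra A) : ElemPrime A := by
  intro x y hxy
  by_contra hne
  push Not at hne
  let J : TwoSidedIdeal A := TwoSidedIdeal.mk' {v | ∀ z, x * z * v = 0}
    (by simp)
    (by intro u v hu hv z; rw [mul_add, hu, hv, add_zero])
    (by intro u hu z; rw [mul_neg, hu, neg_zero])
    (by intro u v hv z; rw [← mul_assoc, mul_assoc x z u]; exact hv _)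
    (by intro u v hu z; rw [← mul_assoc, hu, zero_mul])
  have hJ : ∀ v, v ∈ J ↔ ∀ z, x * z * v = 0 := by
    intro v
    exact TwoSidedIdeal.mem_mk' _ _ _ _ _ _ _
  let I : TwoSidedIdeal A := TwoSidedIdeal.mk' {u | ∀ v ∈ J, ∀ z, u * z * v = 0}
    (by simp)
    (by intro u v hu hv w hw z; rw [add_mul, add_mul, hu w hw, hv w hw, add_zero])
    (by intro u hu w hw z; rw [neg_mul, neg_mul, hu w hw, neg_zero])
    (by intro u v hv w hw z; rw [mul_assoc, mul_assoc, ← mul_assoc v, hv w hw, mul_zero])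
    (by intro u v hu w hw z; rw [mul_assoc u v z]; exact hu w hw _)
  have hI : ∀ u, u ∈ I ↔ ∀ v ∈ J, ∀ z, u * z * v = 0 := by
    intro v
    exact TwoSidedIdeal.mem_mk' _ _ _ _ _ _ _
  have hxI : x ∈ I := (hI x).2 fun v hv z => (hJ v).1 hv z
  have hyJ : y ∈ J := (hJ y).2 hxy
  obtain ⟨u, hu, v, hv, huv⟩ := hA I J
    (fun h => hne.1 (by rw [h] at hxI; exact (TwoSidedIdeal.mem_bot A).1 hxI))
    (fun h => hne.2 (by rw [h] at hyJ; exact (TwoSidedIdeal.mem_bot A).1 hyJ))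
  apply huv
  simpa using (hI u).1 hu v hv 1

lemma prime_of_elem {A : Type*} [Ring A] (hA : ElemPrime A) : IsPrimeAlgebra A := by
  intro I J hI hJ
  by_contra hne
  push Not at hne
  have h1 : ∃ x ∈ I, x ≠ 0 := by
    by_contra h
    push Not at h
    apply hI
    ext x
    rw [TwoSidedIdeal.mem_bot]
    exact ⟨h x, fun hx => hx ▸ I.zero_mem⟩
  have h2 : ∃ x ∈ J, x ≠ 0 := by
    by_contra h
    push Not at h
    apply hJ
    ext x
    rw [TwoSidedIdeal.mem_bot]
    exact ⟨h x, fun hx => hx ▸ J.zero_mem⟩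
  obtain ⟨x, hx, hx0⟩ := h1
  obtain ⟨y, hy, hy0⟩ := h2
  rcases hA x y (fun z => hne _ (I.mul_mem_right _ _ hx) _ hy) with h | h
  · exact hx0 h
  · exact hy0 h

lemma sr_comm_le {A : Type*} [Ring A] [Algebra ℂ A] (a b : A) :
    spectralRadius ℂ (a * b) ≤ spectralRadius ℂ (b * a) := by
  refine iSup₂_le fun k hk => ?_
  by_cases h0 : k = 0
  · simp [h0]
  · have : k ∈ spectrum ℂ (b * a) \ {0} := by
      rw [← spectrum.nonzero_mul_comm]
      exact ⟨hk, h0⟩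
    exact le_iSup₂ (f := fun (k : ℂ) (_ : k ∈ spectrum ℂ (b * a)) => (‖k‖₊ : ENNReal)) k this.1

lemma sr_comm {A : Type*} [Ring A] [Algebra ℂ A] (a b : A) :
    spectralRadius ℂ (a * b) = spectralRadius ℂ (b * a) :=
  le_antisymm (sr_comm_le a b) (sr_comm_le b a)

lemma sr_orth {A : Type*} [Ring A] [Algebra ℂ A] (p q : A) (hpq : p * q = 0) (hqp : q * p = 0) :
    spectralRadius ℂ p ≤ spectralRadius ℂ (p + q) := by
  refine iSup₂_le fun k hk => ?_
  by_cases h0 : k = 0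
  · simp [h0]
  · have : k ∈ spectrum ℂ (p + q) := by
      by_contra hcon
      rw [spectrum.notMem_iff] at hcon
      apply hk
      have e1 : (algebraMap ℂ A k - p) * (algebraMap ℂ A k - q)
          = algebraMap ℂ A k * (algebraMap ℂ A k - (p + q)) := by
        rw [sub_mul, mul_sub, mul_sub p, hpq, ← Algebra.commutes k p]
        noncomm_ring
      have e2 : (algebraMap ℂ A k - q) * (algebraMap ℂ A k - p)
          = algebraMap ℂ A k * (algebraMap ℂ A k - (p + q)) := by
        rw [sub_mul, mul_sub, mul_sub q, hqp, ← Algebra.commutes k q]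
        noncomm_ring
      have hc : Commute (algebraMap ℂ A k - p) (algebraMap ℂ A k - q) := e1.trans e2.symm
      have hu : IsUnit ((algebraMap ℂ A k - p) * (algebraMap ℂ A k - q)) := by
        rw [e1]
        exact ((IsUnit.mk0 k h0).map (algebraMap ℂ A)).mul hcon
      exact (hc.isUnit_mul_iff.1 hu).1
    exact le_iSup₂ (f := fun (k : ℂ) (_ : k ∈ spectrum ℂ (p + q)) => (‖k‖₊ : ENNReal)) k this

open scoped Pointwise in
lemma sr_smul_le {A : Type*} [Ring A] [Algebra ℂ A] (l : ℂ) (hl : ‖l‖ ≤ 1) (p : A) :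
    spectralRadius ℂ (l • p) ≤ spectralRadius ℂ p := by
  refine iSup₂_le fun k hk => ?_
  by_cases h0 : l = 0
  · subst h0
    rw [zero_smul] at hk
    have : k = 0 := by
      by_contra hk0
      apply hk
      have hu := (IsUnit.mk0 k hk0).map (algebraMap ℂ A)
      rw [spectrum.mem_resolventSet_iff, sub_zero]
      exact hu
    simp [this]
  · have : l⁻¹ * k ∈ spectrum ℂ p := by
      have h := spectrum.unit_smul_eq_smul p (Units.mk0 l h0)
      have hk' : k ∈ Units.mk0 l h0 • spectrum ℂ p := by rw [← h]; exact hk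
      rw [Set.mem_smul_set_iff_inv_smul_mem] at hk'
      simpa [Units.smul_def] using hk'
    have h2 := le_iSup₂ (f := fun (k : ℂ) (_ : k ∈ spectrum ℂ p) => (‖k‖₊ : ENNReal)) _ this
    refine le_trans ?_ h2
    norm_cast
    rw [← NNReal.coe_le_coe]
    simp only [coe_nnnorm, norm_mul, norm_inv]
    have hl0 : 0 < ‖l‖ := norm_pos_iff.2 h0
    have : 1 ≤ ‖l‖⁻¹ := (one_le_inv₀ hl0).2 hl
    nlinarith [norm_nonneg k]

section cstar
variable {A : Type*} [CStarAlgebra A]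

lemma norm_dom {a b : A}
    (h : ∀ x : A, spectralRadius ℂ (a * x) ≤ spectralRadius ℂ (b * x)) (x y : A) :
    ‖x * a * y‖ ≤ ‖x * b * y‖ := by
  cases subsingleton_or_nontrivial A
  · simp [Subsingleton.elim a b]
  set w := star (x * a * y) with hw
  have h1 := h (y * w * x)
  have e1 : spectralRadius ℂ (a * (y * w * x)) = spectralRadius ℂ (w * (x * a * y)) := by
    rw [show a * (y * w * x) = (a * y) * (w * x) by noncomm_ring, sr_comm]
    congr 1; noncomm_ring
  have e2 : spectralRadius ℂ (b * (y * w * x)) = spectralRadius ℂ (w * (x * b * y)) := by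
    rw [show b * (y * w * x) = (b * y) * (w * x) by noncomm_ring, sr_comm]
    congr 1; noncomm_ring
  rw [e1, e2, hw, (IsSelfAdjoint.star_mul_self (x * a * y)).spectralRadius_eq_nnnorm] at h1
  have h2 := h1.trans (spectrum.spectralRadius_le_nnnorm _)
  have h3 : ‖star (x * a * y) * (x * a * y)‖ ≤ ‖star (x * a * y) * (x * b * y)‖ := by
    exact_mod_cast h2
  rw [CStarRing.norm_star_mul_self] at h3
  have h4 := h3.trans (norm_mul_le _ _)
  rw [norm_star] at h4
  by_contra hcon
  push Not at hcon
  have : 0 < ‖x * a * y‖ := lt_of_le_of_lt (norm_nonneg _) hcon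
  nlinarith

lemma comm_of_dom {k h : A} (hd : ∀ x y : A, ‖x * k * y‖ ≤ ‖x * h * y‖) : k * h = h * k := by
  have hdiff : ∀ t : ℂ, HasDerivAt
      (fun t : ℂ => NormedSpace.exp (t • h) * k * NormedSpace.exp (t • (-h)))
      ((NormedSpace.exp (t • h) * h) * k * NormedSpace.exp (t • (-h)) +
        NormedSpace.exp (t • h) * k * (NormedSpace.exp (t • (-h)) * (-h))) t := by
    intro t
    exact ((hasDerivAt_exp_smul_const h t).mul_const k).mul (hasDerivAt_exp_smul_const (-h) t)
  have hinv : ∀ t : ℂ, NormedSpace.exp (t • h) * NormedSpace.exp (t • (-h)) = 1 := by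
    intro t
    let _ : NormedAlgebra ℚ A := NormedAlgebra.restrictScalars ℚ ℂ A
    rw [← NormedSpace.exp_add_of_commute]
    · simp
    · simp [Commute.refl]
  have hbd : Bornology.IsBounded (Set.range
      (fun t : ℂ => NormedSpace.exp (t • h) * k * NormedSpace.exp (t • (-h)))) := by
    rw [isBounded_iff_forall_norm_le]
    refine ⟨‖h‖, ?_⟩
    rintro _ ⟨t, rfl⟩
    refine (hd _ _).trans (le_of_eq ?_)
    congr 1
    have hc : Commute (NormedSpace.exp (t • h)) h := by
      apply Commute.exp_left
      exact (Commute.refl h).smul_left t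
    rw [hc.eq, mul_assoc, hinv, mul_one]
  have hD : Differentiable ℂ
      (fun t : ℂ => NormedSpace.exp (t • h) * k * NormedSpace.exp (t • (-h))) :=
    fun t => (hdiff t).differentiableAt
  have hconst : (fun t : ℂ => NormedSpace.exp (t • h) * k * NormedSpace.exp (t • (-h)))
      = fun _ => k := by
    funext t
    have := hD.apply_eq_apply_of_bounded hbd t 0
    simpa using this
  have h0 := hdiff 0
  rw [hconst] at h0
  have := h0.unique (hasDerivAt_const (0 : ℂ) k)
  simp only [zero_smul, NormedSpace.exp_zero, one_mul, mul_one, mul_neg] at this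
  exact (sub_eq_zero.1 (by rw [sub_eq_add_neg]; exact this)).symm

lemma swap_of_dom {a b : A} (hd : ∀ x y : A, ‖x * a * y‖ ≤ ‖x * b * y‖) (z : A) :
    a * z * b = b * z * a := by
  have hunit : ∀ z : A, IsUnit z → a * z * b = b * z * a := by
    intro z hz
    have h := comm_of_dom (k := a * z) (h := b * z) (fun x y => by
      have := hd x (z * y)
      simpa only [mul_assoc] using this)
    apply hz.mul_right_cancel
    simpa only [mul_assoc] using h
  have h1 := hunit 1 isUnit_one
  cases subsingleton_or_nontrivial A
  · exact Subsingleton.elim _ _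
  obtain ⟨r, hr⟩ : ∃ r : ℂ, r ∉ spectrum ℂ z := by
    refine ⟨((‖z‖ + 1 : ℝ) : ℂ), fun hmem => ?_⟩
    have := spectrum.norm_le_norm_of_mem hmem
    rw [Complex.norm_real, Real.norm_of_nonneg (by positivity)] at this
    linarith
  rw [spectrum.notMem_iff] at hr
  have h2 := hunit _ hr
  rw [Algebra.algebraMap_eq_smul_one] at h2
  simp only [mul_sub, sub_mul, mul_smul_comm, smul_mul_assoc, h1] at h2
  exact sub_right_injective h2

lemma scalar_of_comm (hA : ElemPrime A) {h e : A} (hh : IsSelfAdjoint h) (he : e ≠ 0)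
    (hc : Commute h e) (hcy : ∀ y, Commute h (e * y * e)) : ∃ l : ℝ, h * e = l • e := by
  have : Nontrivial A := ⟨e, 0, he⟩
  have dich : ∀ f g : ℝ → ℝ, Continuous f → Continuous g → (∀ t, f t * g t = 0) →
      cfc f h * e = 0 ∨ cfc g h * e = 0 := by
    intro f g hf hg hfg
    have h1 : cfc f h * cfc g h = 0 := by
      rw [← cfc_mul f g h hf.continuousOn hg.continuousOn]
      simp [hfg]
    rw [((hc.cfc_real g).eq : cfc g h * e = _)]
    apply hA
    intro z
    calc cfc f h * e * z * (e * cfc g h) = cfc f h * (e * z * e) * cfc g h := by noncomm_ring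
      _ = (e * z * e) * (cfc f h * cfc g h) := by
        rw [((hcy z).cfc_real f).eq, mul_assoc]
      _ = 0 := by rw [h1, mul_zero]
  have hsp : ∀ s ∈ spectrum ℝ h, |s| ≤ ‖h‖ := fun s hs => spectrum.norm_le_norm_of_mem hs
  set S : Set ℝ := {t | cfc (fun s : ℝ => max (s - t) 0) h * e = 0} with hS
  have hne : S.Nonempty := by
    refine ⟨‖h‖, ?_⟩
    have : cfc (fun s : ℝ => max (s - ‖h‖) 0) h = cfc (fun _ : ℝ => (0 : ℝ)) h := by
      apply cfc_congr
      intro s hs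
      have := (abs_le.1 (hsp s hs)).2
      simp [this]
    simp [hS, this]
  have hbb : BddBelow S := by
    refine ⟨-‖h‖ - 1, fun t ht => ?_⟩
    by_contra hlt
    push Not at hlt
    apply he
    have hprod : cfc (fun s : ℝ => (max (s - t) 1)⁻¹) h * cfc (fun s : ℝ => max (s - t) 0) h = 1 := by
      have hci : Continuous (fun s : ℝ => (max (s - t) 1)⁻¹) := Continuous.inv₀ (by fun_prop)
        (fun s => (lt_of_lt_of_le one_pos (le_max_right _ _)).ne')
      rw [← cfc_mul (fun s : ℝ => (max (s - t) 1)⁻¹) (fun s : ℝ => max (s - t) 0) h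
        hci.continuousOn (by fun_prop)]
      rw [← cfc_one ℝ h]
      apply cfc_congr
      intro s hs
      have := (abs_le.1 (hsp s hs)).1
      have h1 : 1 ≤ s - t := by linarith
      have h2 : 0 ≤ s - t := by linarith
      simp only [max_eq_left h1, max_eq_left h2, Pi.one_apply]
      exact inv_mul_cancel₀ (by linarith)
    have ht' : cfc (fun s : ℝ => max (s - t) 0) h * e = 0 := ht
    rw [← one_mul e, ← hprod, mul_assoc, ht', mul_zero]
  refine ⟨sInf S, ?_⟩
  set l := sInf S with hl
  have key : ∀ ε : ℝ, 0 < ε → ‖h * e - l • e‖ ≤ ε * ‖e‖ := by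
    intro ε hε
    obtain ⟨t, ht, htl⟩ := exists_lt_of_csInf_lt hne (show sInf S < l + ε by linarith)
    have hlt : l ≤ t := csInf_le hbb ht
    have hm : l - ε ∉ S := fun hm => by
      have := csInf_le hbb hm
      linarith
    have h2 : cfc (fun s : ℝ => max ((l - ε) - s) 0) h * e = 0 := by
      refine (dich (fun s : ℝ => max (s - (l - ε)) 0) (fun s : ℝ => max ((l - ε) - s) 0)
        (by fun_prop) (by fun_prop) ?_).resolve_left hm
      intro s
      rcases le_total s (l - ε) with h | h
      · rw [max_eq_right (by linarith), zero_mul]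
      · rw [mul_comm, max_eq_right (by linarith), zero_mul]
    have ht' : cfc (fun s : ℝ => max (s - t) 0) h * e = 0 := ht
    set r : ℝ → ℝ := fun s => (s - l) - (max (s - t) 0 - max ((l - ε) - s) 0) with hr
    have hrn : ‖cfc r h‖ ≤ ε := by
      apply norm_cfc_le hε.le
      intro s _
      rw [Real.norm_eq_abs, abs_le, hr]
      rcases le_total (s - t) 0 with h1 | h1 <;> rcases le_total ((l - ε) - s) 0 with h3 | h3 <;>
        simp only [h1, h3, max_eq_left, max_eq_right] <;> constructor <;> linarith
    have hdec : cfc r h * e = h * e - l • e := by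
      rw [hr, cfc_sub _ _ h (by fun_prop) (by fun_prop), cfc_sub _ _ h (by fun_prop) (by fun_prop),
        cfc_sub _ _ h (by fun_prop) (by fun_prop), cfc_id' ℝ h, cfc_const l h, sub_mul, sub_mul,
        sub_mul, ht', h2, Algebra.algebraMap_eq_smul_one, smul_mul_assoc, one_mul]
      simp
    rw [← hdec]
    exact (norm_mul_le _ _).trans (by gcongr)
  have hz : ‖h * e - l • e‖ ≤ 0 := by
    apply le_of_forall_pos_le_add
    intro δ hδ
    have hep : 0 < ‖e‖ := norm_pos_iff.2 he
    have := key (δ / ‖e‖) (by positivity)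
    rw [div_mul_cancel₀ _ hep.ne'] at this
    linarith
  exact sub_eq_zero.1 (norm_le_zero_iff.1 hz)

lemma scalar_sa (hA : ElemPrime A) {α B : A} (hα : IsSelfAdjoint α) (hB : IsSelfAdjoint B)
    (hB0 : B ≠ 0) (hs : ∀ z, α * z * B = B * z * α) : ∃ l : ℝ, α = l • B := by
  set M := ‖B‖ with hM
  have hMpos : 0 < M := norm_pos_iff.2 hB0
  have hcomm : Commute B α := by
    have := hs 1
    rw [mul_one, mul_one] at this
    exact this.symm
  have hkc : Continuous (fun t : ℝ => t / max (t ^ 2) (M ^ 2 / 4)) :=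
    Continuous.div (by fun_prop) (by fun_prop)
      (fun s => (lt_of_lt_of_le (by positivity : 0 < M ^ 2 / 4) (le_max_right _ _)).ne')
  have hfc : Continuous (fun t : ℝ => max (|t| - M / 2) 0) := by fun_prop
  set k := cfc (fun t : ℝ => t / max (t ^ 2) (M ^ 2 / 4)) B with hk
  set e := cfc (fun t : ℝ => max (|t| - M / 2) 0) B with he
  have hkα : Commute k α := hcomm.cfc_real _
  have heα : Commute e α := hcomm.cfc_real _
  have hkB : Commute k B := (Commute.refl B).cfc_real _
  have heB : Commute e B := (Commute.refl B).cfc_real _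
  have hke : Commute k e := cfc_commute_cfc _ _ _
  have hksa : IsSelfAdjoint k := cfc_predicate _ _
  have hkBe : k * B * e = e := by
    have hid : B = cfc (fun t : ℝ => t) B := (cfc_id' ℝ B).symm
    have : k * B = cfc (fun t : ℝ => (t / max (t ^ 2) (M ^ 2 / 4)) * t) B := by
      rw [cfc_mul _ _ B hkc.continuousOn (by fun_prop), cfc_id' ℝ B]
    rw [this, he, ← cfc_mul (fun t : ℝ => (t / max (t ^ 2) (M ^ 2 / 4)) * t) _ B
      (hkc.mul continuous_id).continuousOn hfc.continuousOn]
    apply cfc_congr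
    intro t _
    rcases le_total (|t| - M / 2) 0 with h | h
    · simp [max_eq_right h]
    · have h1 : M ^ 2 / 4 ≤ t ^ 2 := by
        rw [← sq_abs t]; nlinarith
      have h2 : t ^ 2 ≠ 0 := by nlinarith
      have h3 : t ≠ 0 := fun h => h2 (by simp [h])
      simp only [max_eq_left h1]
      field_simp
  have he0 : e ≠ 0 := by
    intro h0
    have : ‖cfc (fun t : ℝ => t) B‖ ≤ M / 2 := by
      apply norm_cfc_le (by positivity)
      intro t ht
      have h1 := norm_apply_le_norm_cfc (fun t : ℝ => max (|t| - M / 2) 0) B ht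
        hfc.continuousOn hB
      rw [← he, h0, norm_zero] at h1
      have h2 : max (|t| - M / 2) 0 ≤ 0 := (le_abs_self _).trans h1
      have h3 := (le_max_left _ _).trans h2
      rw [Real.norm_eq_abs]
      linarith
    rw [cfc_id' ℝ B] at this
    linarith
  -- the localized quotient
  have hsa : IsSelfAdjoint (α * k) := by
    rw [IsSelfAdjoint, star_mul, hα.star_eq, hksa.star_eq, hkα.eq]
  have heBk : e * (B * k) = e := by
    rw [← hkB.eq, ← ((hke.symm.mul_right heB)).eq.symm]
    exact hkBe
  have hlc : ∀ y, Commute (α * k) (e * y * e) := by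
    intro y
    have h1 := hs (e * y * e)
    have h2 : k * (α * (e * y * e) * B) * k = k * (B * (e * y * e) * α) * k := by rw [h1]
    have h3 : k * (α * (e * y * e) * B) * k = (α * k) * (e * y * e) := by
      calc k * (α * (e * y * e) * B) * k = (k * α) * e * y * (e * (B * k)) := by noncomm_ring
        _ = _ := by rw [heBk, hkα.eq]; noncomm_ring
    have h4 : k * (B * (e * y * e) * α) * k = (e * y * e) * (α * k) := by
      calc k * (B * (e * y * e) * α) * k = (k * B * e) * y * e * (α * k) := by noncomm_ring
        _ = _ := by rw [hkBe]
    exact h3.symm.trans (h2.trans h4)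
  obtain ⟨l, hl⟩ := scalar_of_comm hA hsa he0 ((heα.mul_right hke.symm).symm) hlc
  refine ⟨l, ?_⟩
  have h1 : α * e = l • (B * e) := by
    calc α * e = α * (k * B * e) := by rw [hkBe]
      _ = α * k * (B * e) := by noncomm_ring
      _ = (α * k * e) * B := by rw [← heB.eq]; noncomm_ring
      _ = l • (e * B) := by rw [hl, smul_mul_assoc]
      _ = _ := by rw [heB.eq]
  have hBe : B * e ≠ 0 := by
    intro h
    apply he0
    rw [← hkBe, mul_assoc, h, mul_zero]
  have h2 := hA (α - l • B) (B * e) (fun z => by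
    calc (α - l • B) * z * (B * e) = (α * z * B - l • (B * z * B)) * e := by
          simp only [sub_mul, smul_mul_assoc, mul_assoc]
      _ = B * z * (α * e - l • (B * e)) := by
          rw [hs]; simp only [sub_mul, mul_sub, smul_mul_assoc, mul_smul_comm, mul_assoc]
      _ = 0 := by rw [h1, sub_self, mul_zero])
  exact sub_eq_zero.1 (h2.resolve_right hBe)

lemma scalar_gen (hA : ElemPrime A) {α B : A} (hB : IsSelfAdjoint B)
    (hB0 : B ≠ 0) (hs : ∀ z, α * z * B = B * z * α) : ∃ l : ℂ, α = l • B := by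
  have hs' : ∀ z, star α * z * B = B * z * star α := by
    intro z
    have := congrArg star (hs (star z))
    simp only [star_mul, star_star, hB.star_eq] at this
    simpa only [mul_assoc] using this.symm
  obtain ⟨l, hl⟩ := scalar_sa hA (α := α + star α) (IsSelfAdjoint.add_star_self α) hB hB0
    (fun z => by simp only [add_mul, mul_add, hs, hs'])
  obtain ⟨m, hm⟩ := scalar_sa hA (α := Complex.I • (α - star α)) (by
      rw [IsSelfAdjoint, star_smul, star_sub, star_star]
      simp [← smul_neg]) hB hB0
    (fun z => by simp only [sub_mul, mul_sub, smul_mul_assoc, mul_smul_comm, hs, hs'])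
  refine ⟨(1 / 2 : ℂ) * ((l : ℂ) - Complex.I * m), ?_⟩
  have hl' : α + star α = (l : ℂ) • B := by rw [hl]; simp
  have hm' : α - star α = (-Complex.I * m : ℂ) • B := by
    have : (-Complex.I) • (Complex.I • (α - star α)) = (-Complex.I) • ((m : ℂ) • B) := by
      rw [hm]; simp
    rw [smul_smul, smul_smul] at this
    simpa using this
  have : α = (1 / 2 : ℂ) • ((α + star α) + (α - star α)) := by
    rw [show (α + star α) + (α - star α) = (2 : ℂ) • α by rw [two_smul]; abel, smul_smul]
    norm_num
  rw [this, hl', hm', ← add_smul, smul_smul]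
  congr 1
  ring

lemma forward (hA : ElemPrime A) {a b : A}
    (h : ∀ x : A, spectralRadius ℂ (a * x) ≤ spectralRadius ℂ (b * x)) :
    ∃ lam : ℂ, ‖lam‖ ≤ 1 ∧ a = lam • b := by
  have hd := norm_dom h
  have hab : ‖a‖ ≤ ‖b‖ := by simpa using hd 1 1
  by_cases hb : b = 0
  · subst hb
    refine ⟨0, by simp, ?_⟩
    simpa using hab
  have hsw := swap_of_dom hd
  have hB0 : star b * b ≠ 0 := by
    rwa [Ne, CStarRing.star_mul_self_eq_zero_iff]
  obtain ⟨l, hl⟩ := scalar_gen hA (α := star b * a) (B := star b * b)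
    (IsSelfAdjoint.star_mul_self b) hB0 (fun z => by
      have := hsw (z * star b)
      calc star b * a * z * (star b * b) = star b * (a * (z * star b) * b) := by noncomm_ring
        _ = _ := by rw [this]; noncomm_ring)
  have hz := hA (star b * b) (a - l • b) (fun z => by
    calc star b * b * z * (a - l • b) = star b * (b * z * a) - l • (star b * b * z * b) := by
          simp only [mul_sub, mul_smul_comm, mul_assoc]
      _ = (star b * a - l • (star b * b)) * z * b := by
          rw [← hsw]; simp only [sub_mul, smul_mul_assoc, mul_assoc]
      _ = 0 := by rw [hl, sub_self, zero_mul, zero_mul])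
  have hal := sub_eq_zero.1 (hz.resolve_left hB0)
  refine ⟨l, ?_, hal⟩
  rw [hal, norm_smul] at hab
  have : 0 < ‖b‖ := norm_pos_iff.2 hb
  nlinarith

lemma backward (h : ∀ a b : A,
    ((∀ x : A, spectralRadius ℂ (a * x) ≤ spectralRadius ℂ (b * x)) →
          ∃ lam : ℂ, ‖lam‖ ≤ 1 ∧ a = lam • b)) : ElemPrime A := by
  intro x y hxy
  by_contra hne
  push Not at hne
  set u := star x * x with hu
  set v := y * star y with hv
  have hu0 : u ≠ 0 := by rw [hu, Ne, CStarRing.star_mul_self_eq_zero_iff]; exact hne.1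
  have hv0 : v ≠ 0 := by rw [hv, Ne, CStarRing.mul_star_self_eq_zero_iff]; exact hne.2
  have husa : star u = u := by simp [hu]
  have hvsa : star v = v := by simp [hv]
  have huv : ∀ z, u * z * v = 0 := by
    intro z
    calc u * z * v = star x * (x * z * y) * star y := by rw [hu, hv]; noncomm_ring
      _ = 0 := by rw [hxy, mul_zero, zero_mul]
  have hvu : ∀ z, v * z * u = 0 := by
    intro z
    have := congrArg star (huv (star z))
    simpa [husa, hvsa, mul_assoc] using this
  obtain ⟨l, -, hl⟩ := h u (u + v) (fun z => by
    rw [add_mul]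
    apply sr_orth
    · rw [← mul_assoc, huv, zero_mul]
    · rw [← mul_assoc, hvu, zero_mul])
  have h1 : u * v = 0 := by simpa using huv 1
  have h2 : v * u = 0 := by simpa using hvu 1
  have hvv : v * v ≠ 0 := by
    nth_rewrite 1 [← hvsa]; rwa [Ne, CStarRing.star_mul_self_eq_zero_iff]
  have h3 : l • (v * v) = 0 := by
    have := congrArg (fun t => t * v) hl
    simpa [smul_mul_assoc, add_mul, h1] using this.symm
  rcases smul_eq_zero.1 h3 with h | h
  · rw [h, zero_smul] at hl; exact hu0 hl
  · exact hvv h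

end cstar

theorem cstar_prime_iff_spectralRadius_domination
    {A : Type*} [CStarAlgebra A] :
    IsPrimeAlgebra A ↔
      ∀ a b : A,
        ((∀ x : A, spectralRadius ℂ (a * x) ≤ spectralRadius ℂ (b * x)) ↔
          ∃ lam : ℂ, ‖lam‖ ≤ 1 ∧ a = lam • b) := by
  constructor
  · intro hA a b
    refine ⟨fun h => forward (elemPrime_of_prime hA) h, ?_⟩
    rintro ⟨l, hl, rfl⟩ x
    rw [smul_mul_assoc]
    exact sr_smul_le l hl _
  · intro h
    exact prime_of_elem (backward fun a b => (h a b).1)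
end
end
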